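/- arXiv:1805.03566 — 3 statements merged into one kernel-verified Lean document; each statement's English description precedes it below -/
import Mathlib

section
/- Let ν be a lattice path and let ←ν be the lattice path obtained by reading ν backwards and exchanging north and east steps. Then the ν-Tamari lattice Tam(ν) is order-isomorphic to the order dual of the ←ν-Tamari lattice Tam(←ν). -/
open scoped Classical

/-! Lattice paths: `true` = north step, `false` = east step. -/

def eastSteps (ν : List Bool) : ℕ := ν.count false
def northSteps (ν : List Bool) : ℕ := ν.count true

/-- Height at which the path first reaches abscissa `x`. -/
def heightAt : List Bool → ℕ → ℕ
  | _, 0 => 0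
  | [], _ + 1 => 0
  | true :: rest, x + 1 => heightAt rest (x + 1) + 1
  | false :: rest, x + 1 => heightAt rest x

/-- Lattice point of a path after `i` steps. -/
def pointAt (μ : List Bool) (i : ℕ) : ℕ × ℕ :=
  ((μ.take i).count false, (μ.take i).count true)

/-- The set `A_ν` of lattice points weakly above `ν`. -/
def APts (ν : List Bool) : Set (ℕ × ℕ) :=
  {p | p.1 ≤ eastSteps ν ∧ heightAt ν p.1 ≤ p.2 ∧ p.2 ≤ northSteps ν}

def Incompatible (ν : List Bool) (p q : ℕ × ℕ) : Prop :=
  (p.1 < q.1 ∧ p.2 < q.2 ∧ (q.1, p.2) ∈ APts ν) ∨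
    (q.1 < p.1 ∧ q.2 < p.2 ∧ (p.1, q.2) ∈ APts ν)

def Compatible (ν : List Bool) (p q : ℕ × ℕ) : Prop := ¬ Incompatible ν p q

def IsNuTree (ν : List Bool) (T : Set (ℕ × ℕ)) : Prop :=
  T ⊆ APts ν ∧ T.Pairwise (Compatible ν) ∧
    ∀ T', T' ⊆ APts ν → T'.Pairwise (Compatible ν) → T ⊆ T' → T' = T

def IsRightRotationAt (T T' : Set (ℕ × ℕ)) (q q' : ℕ × ℕ) : Prop :=
  ∃ x y x'' y', q = (x, y) ∧ q' = (x'', y') ∧ x < x'' ∧ y < y' ∧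
    (x, y) ∈ T ∧ (x, y') ∈ T ∧ (x'', y) ∈ T ∧
    (∀ b, y < b → b < y' → (x, b) ∉ T) ∧
    (∀ a, x < a → a < x'' → (a, y) ∉ T) ∧
    (∀ a, x < a → a < x'' → (a, y') ∉ T) ∧
    (∀ b, y < b → b < y' → (x'', b) ∉ T) ∧
    T' = (T \ {(x, y)}) ∪ {(x'', y')}

def IsRightRotation (T T' : Set (ℕ × ℕ)) : Prop :=
  ∃ q q', IsRightRotationAt T T' q q'

/-- Order relation of the rotation poset of ν-trees. -/
def TreeLE (ν : List Bool) : Set (ℕ × ℕ) → Set (ℕ × ℕ) → Prop :=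
  Relation.ReflTransGen fun A B => IsNuTree ν A ∧ IsNuTree ν B ∧ IsRightRotation A B

def IsNuPath (ν μ : List Bool) : Prop :=
  eastSteps μ = eastSteps ν ∧ northSteps μ = northSteps ν ∧
    ∀ i ≤ μ.length, pointAt μ i ∈ APts ν

noncomputable def horiz (ν : List Bool) (p : ℕ × ℕ) : ℕ :=
  sSup {k | (p.1 + k, p.2) ∈ APts ν}

/-- Covering relation of the ν-Tamari lattice. -/
def TamariCover (ν μ μ' : List Bool) : Prop :=
  IsNuPath ν μ ∧ IsNuPath ν μ' ∧
    ∃ i j, 0 < i ∧ i < j ∧ j ≤ μ.length ∧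
      μ.getD (i - 1) true = false ∧ μ.getD i false = true ∧
      horiz ν (pointAt μ j) = horiz ν (pointAt μ i) ∧
      (∀ k, i < k → k < j → horiz ν (pointAt μ k) ≠ horiz ν (pointAt μ i)) ∧
      μ' = μ.take (i - 1) ++ (μ.drop i).take (j - i) ++ [false] ++ μ.drop j

def TamariLE (ν : List Bool) : List Bool → List Bool → Prop :=
  Relation.ReflTransGen (TamariCover ν)

/-! Flushing maps -/

def rowAvail (ν : List Bool) (y : ℕ) : List ℕ :=
  ((List.range (eastSteps ν + 1)).filter fun x => decide (heightAt ν x ≤ y)).reverse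

def pointsAtHeight (μ : List Bool) (y : ℕ) : ℕ :=
  ((List.range (μ.length + 1)).filter fun i => decide ((μ.take i).count true = y)).length

def rflushAux (ν : List Bool) : List ℕ → ℕ → List ℕ → List (ℕ × ℕ)
  | [], _, _ => []
  | c :: rest, y, forbidden =>
    let placed := ((rowAvail ν y).filter fun x => decide (x ∉ forbidden)).take c
    placed.map (fun x => (x, y)) ++ rflushAux ν rest (y + 1) (forbidden ++ placed.dropLast)

/-- Right-flushing map `R`. -/
def Rflush (ν μ : List Bool) : Set (ℕ × ℕ) :=
  {p | p ∈ rflushAux ν ((List.range (northSteps ν + 1)).map (pointsAtHeight μ)) 0 []}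

def lflushAux (m : ℕ) : List ℕ → ℕ → List ℕ → List (ℕ × ℕ)
  | [], _, _ => []
  | c :: rest, y, forbidden =>
    let placed := ((List.range (m + 1)).filter fun x => decide (x ∉ forbidden)).take c
    placed.map (fun x => (x, y)) ++ lflushAux m rest (y + 1) (forbidden ++ placed.dropLast)

noncomputable def rowCount (T : Set (ℕ × ℕ)) (y : ℕ) : ℕ := {x | (x, y) ∈ T}.ncard

/-- Left-flushing map `L`. -/
noncomputable def Lflush (ν : List Bool) (T : Set (ℕ × ℕ)) : Set (ℕ × ℕ) :=
  {p | p ∈ lflushAux (eastSteps ν) ((List.range (northSteps ν + 1)).map (rowCount T)) 0 []}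

def pathPointSet (μ : List Bool) : Set (ℕ × ℕ) := {p | ∃ i ≤ μ.length, pointAt μ i = p}

/-! Bracket vectors (0-indexed positions `0,…,ℓ`). -/

noncomputable def fpos (ν : List Bool) (k : ℕ) : ℕ :=
  sSup {i | i ≤ ν.length ∧ (ν.take i).count true = k}

def bmin (ν : List Bool) : List ℕ :=
  (List.range (ν.length + 1)).map fun i => (ν.take i).count true

def IsBracketVector (ν : List Bool) (b : List ℕ) : Prop :=
  b.length = ν.length + 1 ∧
    (∀ k ≤ northSteps ν, b.getD (fpos ν k) 0 = k) ∧
    (∀ i < b.length, (bmin ν).getD i 0 ≤ b.getD i 0 ∧ b.getD i 0 ≤ northSteps ν) ∧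
    ∀ i j k, i < j → j < k → k < b.length →
      ¬(b.getD i 0 = b.getD k 0 ∧ b.getD i 0 < b.getD j 0)

noncomputable def leftChild (T : Set (ℕ × ℕ)) (p : ℕ × ℕ) : Option (ℕ × ℕ) :=
  if ∃ b, (p.1, b) ∈ T ∧ b < p.2 then some (p.1, sSup {b | (p.1, b) ∈ T ∧ b < p.2})
  else none

noncomputable def rightChild (T : Set (ℕ × ℕ)) (p : ℕ × ℕ) : Option (ℕ × ℕ) :=
  if ∃ a, (a, p.2) ∈ T ∧ p.1 < a then
    if ∃ b, (sInf {a | (a, p.2) ∈ T ∧ p.1 < a}, b) ∈ T ∧ p.2 < b then none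
    else some (sInf {a | (a, p.2) ∈ T ∧ p.1 < a}, p.2)
  else none

noncomputable def inorderAux (T : Set (ℕ × ℕ)) : ℕ → ℕ × ℕ → List (ℕ × ℕ)
  | 0, _ => []
  | fuel + 1, p =>
    (match leftChild T p with
      | none => []
      | some l => inorderAux T fuel l) ++ p ::
      (match rightChild T p with
        | none => []
        | some r => inorderAux T fuel r)

/-- Bracket vector of a ν-tree: y-coordinates read in in-order from the root `(0,n)`. -/
noncomputable def bracketOfTree (ν : List Bool) (T : Set (ℕ × ℕ)) : List ℕ :=
  (inorderAux T T.ncard (0, northSteps ν)).map Prod.snd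

noncomputable def bracketAssign (ν μ : List Bool) : List (ℕ × ℕ) :=
  ((List.range (northSteps ν + 1)).foldl
    (fun (st : List (ℕ × ℕ) × List ℕ) k =>
      let picked := ((st.2.filter fun i => decide (i ≤ fpos ν k)).reverse).take
        (pointsAtHeight μ k)
      (st.1 ++ picked.map fun i => (i, k), st.2.filter fun i => decide (i ∉ picked)))
    ([], List.range (ν.length + 1))).1

/-- Bracket vector of a ν-path. -/
noncomputable def bracketOfPath (ν μ : List Bool) : List ℕ :=
  (List.range (ν.length + 1)).map fun i => ((bracketAssign ν μ).lookup i).getD 0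

/-- Componentwise order on (equal length) integer vectors. -/
def listLE (b b' : List ℕ) : Prop :=
  b.length = b'.length ∧ ∀ i, b.getD i 0 ≤ b'.getD i 0

/-! Reversal -/

def revPath (ν : List Bool) : List Bool := ν.reverse.map fun s => !s

def revTree (ν : List Bool) (T : Set (ℕ × ℕ)) : Set (ℕ × ℕ) :=
  (fun p : ℕ × ℕ => (northSteps ν - p.2, eastSteps ν - p.1)) '' T

/-! Pipe dreams and subword complexes -/

def dOf (ν : List Bool) (p : ℕ × ℕ) : ℕ := p.1 + (northSteps ν - p.2)

def labelPerm (ν : List Bool) (p : ℕ × ℕ) : Equiv.Perm ℕ :=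
  Equiv.swap (dOf ν p + 1) (dOf ν p + 2)

/-- The points of `A_ν` in reading order: rows from bottom to top, each left to right. -/
def readingList (ν : List Bool) : List (ℕ × ℕ) :=
  ((List.range (northSteps ν + 1)).map fun y =>
    ((List.range (eastSteps ν + 1)).filter fun x => decide (heightAt ν x ≤ y)).map
      fun x => (x, y)).flatten

/-- The minimal ν-tree. -/
def TminSet (ν : List Bool) : Set (ℕ × ℕ) :=
  {p | p ∈ APts ν ∧ (p.1 = 0 ∨ ∃ i < ν.length, ν.getD i true = false ∧ p = pointAt ν (i + 1))}

noncomputable def prodOver (ν : List Bool) (C : Set (ℕ × ℕ)) : Equiv.Perm ℕ :=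
  (((readingList ν).filter fun p => decide (p ∈ C)).map (labelPerm ν)).prod

/-- Coxeter length: number of inversions. -/
noncomputable def lenInv (π : Equiv.Perm ℕ) : ℕ :=
  {q : ℕ × ℕ | q.1 < q.2 ∧ π q.2 < π q.1}.ncard

noncomputable def piNu (ν : List Bool) : Equiv.Perm ℕ := prodOver ν (APts ν \ TminSet ν)

def Qword (ν : List Bool) : List (Equiv.Perm ℕ) := (readingList ν).map (labelPerm ν)

noncomputable def prodAt (Q : List (Equiv.Perm ℕ)) (P : Finset ℕ) : Equiv.Perm ℕ :=
  (((List.range Q.length).filter fun i => decide (i ∈ P)).map fun i => Q.getD i 1).prod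

def IsFacet (Q : List (Equiv.Perm ℕ)) (π : Equiv.Perm ℕ) (I : Finset ℕ) : Prop :=
  I ⊆ Finset.range Q.length ∧
    prodAt Q (Finset.range Q.length \ I) = π ∧
    (Finset.range Q.length \ I).card = lenInv π

def IncFlip (Q : List (Equiv.Perm ℕ)) (π : Equiv.Perm ℕ) (I J : Finset ℕ) : Prop :=
  IsFacet Q π I ∧ IsFacet Q π J ∧ ∃ i ∈ I, ∃ j ∈ J, i < j ∧ I.erase i = J.erase j

def FlipLE (Q : List (Equiv.Perm ℕ)) (π : Equiv.Perm ℕ) : Finset ℕ → Finset ℕ → Prop :=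
  Relation.ReflTransGen (IncFlip Q π)

/-- The maximal ν-tree. -/
def TmaxSet (ν : List Bool) : Set (ℕ × ℕ) :=
  {p | (p.1 ≤ eastSteps ν ∧ p.2 = northSteps ν) ∨ ∃ i < ν.length, ν.getD i false = true ∧ p = pointAt ν i}

/-! ### Binary trees, their canopy word and their path word -/

/-- Binary trees. -/
inductive BTr : Type
  | nil : BTr
  | node : BTr → BTr → BTr

namespace BTr

def isNil : BTr → Bool
  | nil => true
  | node _ _ => false

/-- The path word of a tree. -/
def pw : BTr → List Bool
  | nil => []
  | node L R => (bif L.isNil then [] else pw L ++ [true]) ++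
      (bif R.isNil then [] else pw R ++ [false])

/-- The canopy word of a tree. -/
def cw : BTr → List Bool
  | nil => []
  | node L R => (bif L.isNil then [] else cw L ++ [true]) ++
      (bif R.isNil then [] else false :: cw R)

def pl (L : BTr) : List Bool := bif L.isNil then [] else pw L ++ [true]
def pr (R : BTr) : List Bool := bif R.isNil then [] else pw R ++ [false]
def cl (L : BTr) : List Bool := bif L.isNil then [] else cw L ++ [true]
def cr (R : BTr) : List Bool := bif R.isNil then [] else false :: cw R

theorem pw_node (L R : BTr) : pw (node L R) = pl L ++ pr R := rfl
theorem cw_node (L R : BTr) : cw (node L R) = cl L ++ cr R := rfl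

theorem cases_nil (T : BTr) : T = nil ∨ T.isNil = false := by
  cases T <;> simp [isNil]

@[simp] theorem pl_nil : pl nil = [] := rfl
@[simp] theorem pr_nil : pr nil = [] := rfl
@[simp] theorem cl_nil : cl nil = [] := rfl
@[simp] theorem cr_nil : cr nil = [] := rfl
theorem pl_of {T : BTr} (h : T.isNil = false) : pl T = pw T ++ [true] := by simp [pl, h]
theorem pr_of {T : BTr} (h : T.isNil = false) : pr T = pw T ++ [false] := by simp [pr, h]
theorem cl_of {T : BTr} (h : T.isNil = false) : cl T = cw T ++ [true] := by simp [cl, h]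
theorem cr_of {T : BTr} (h : T.isNil = false) : cr T = false :: cw T := by simp [cr, h]
@[simp] theorem isNil_node (L R : BTr) : (node L R).isNil = false := rfl

theorem count_pw (b : Bool) (T : BTr) : (pw T).count b = (cw T).count b := by
  induction T with
  | nil => rfl
  | node L R ihL ihR =>
    rw [pw_node, cw_node, List.count_append, List.count_append]
    rcases cases_nil L with rfl | hL <;> rcases cases_nil R with rfl | hR <;>
      simp [pl_of, pr_of, cl_of, cr_of, *, List.count_append, List.count_cons] <;> omega

theorem count_pl (b : Bool) (T : BTr) : (pl T).count b = (cl T).count b := by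
  rcases cases_nil T with rfl | hL
  · rfl
  · simp [pl_of hL, cl_of hL, count_pw]

theorem count_pr (b : Bool) (T : BTr) : (pr T).count b = (cr T).count b := by
  rcases cases_nil T with rfl | hL
  · rfl
  · simp [pr_of hL, cr_of hL, count_pw, List.count_cons]

def mirror : BTr → BTr
  | nil => nil
  | node L R => node R.mirror L.mirror

@[simp] theorem mirror_mirror (T : BTr) : T.mirror.mirror = T := by
  induction T <;> simp [mirror, *]

@[simp] theorem isNil_mirror (T : BTr) : T.mirror.isNil = T.isNil := by
  cases T <;> rfl

theorem cw_mirror (T : BTr) : cw T.mirror = revPath (cw T) := by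
  induction T with
  | nil => rfl
  | node L R ihL ihR =>
    rw [mirror, cw_node, cw_node]
    rcases cases_nil L with rfl | hL <;> rcases cases_nil R with rfl | hR <;>
      simp [cl_of, cr_of, revPath, mirror, *]

end BTr

open BTr

/-! ### Row maxima -/

/-- The largest abscissa of the path in row `y`. -/
def rowMax : List Bool → ℕ → ℕ
  | [], _ => 0
  | false :: w, y => rowMax w y + 1
  | true :: _, 0 => 0
  | true :: w, y + 1 => rowMax w y

theorem rowMax_append (u w : List Bool) (k : ℕ) :
    rowMax (u ++ w) (u.count true + k) = u.count false + rowMax w k := by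
  induction u with
  | nil => simp
  | cons b u ih =>
    cases b
    · simp [rowMax, ih]; omega
    · have : (true :: u).count true + k = (u.count true + k) + 1 := by simp; omega
      rw [this]; simp [rowMax, ih]

theorem rowMax_left (w v : List Bool) (k : ℕ) (h : k ≤ w.count true) :
    rowMax (w ++ true :: v) k = rowMax w k := by
  induction w generalizing k with
  | nil => simp at h; subst h; rfl
  | cons b w ih =>
    cases b
    · simp [rowMax]; exact ih k (by simpa using h)
    · cases k with
      | zero => rfl
      | succ k => simp [rowMax]; exact ih k (by simpa using h)

theorem rowMax_full (w : List Bool) (k : ℕ) (h : w.count true ≤ k) :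
    rowMax w k = w.count false := by
  induction w generalizing k with
  | nil => rfl
  | cons b w ih =>
    cases b
    · simp [rowMax]; exact ih k (by simpa using h)
    · cases k with
      | zero => simp at h
      | succ k => simp [rowMax]; exact ih k (by simpa using h)

theorem rowMax_le (w : List Bool) (k : ℕ) : rowMax w k ≤ w.count false := by
  induction w generalizing k with
  | nil => simp [rowMax]
  | cons b w ih =>
    cases b
    · simp [rowMax]; exact ih k
    · cases k with
      | zero => simp [rowMax]
      | succ k => simp [rowMax]; exact ih k

theorem heightAt_le_iff (w : List Bool) (x y : ℕ) (h : x ≤ w.count false) :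
    heightAt w x ≤ y ↔ x ≤ rowMax w y := by
  induction w generalizing x y with
  | nil => simp at h; subst h; simp [heightAt]
  | cons b w ih =>
    cases x with
    | zero => simp [heightAt]
    | succ x =>
      cases b
      · simp [rowMax, heightAt]; exact ih x y (by simpa using h)
      · cases y with
        | zero => simp [rowMax, heightAt]
        | succ y => simp [rowMax, heightAt]; exact ih (x+1) y (by simpa using h)

theorem mem_APts (ν : List Bool) (x y : ℕ) :
    (x, y) ∈ APts ν ↔ x ≤ rowMax ν y ∧ y ≤ ν.count true := by
  unfold APts eastSteps northSteps
  simp only [Set.mem_setOf_eq]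
  constructor
  · rintro ⟨h1, h2, h3⟩
    exact ⟨(heightAt_le_iff ν x y h1).1 h2, h3⟩
  · rintro ⟨h1, h3⟩
    have h0 := h1.trans (rowMax_le ν y)
    exact ⟨h0, (heightAt_le_iff ν x y h0).2 h1, h3⟩

theorem horiz_eq (ν : List Bool) (x y : ℕ) (h : (x, y) ∈ APts ν) :
    horiz ν (x, y) = rowMax ν y - x := by
  rw [mem_APts] at h
  unfold horiz
  have : {k | (((x, y) : ℕ × ℕ).1 + k, ((x, y) : ℕ × ℕ).2) ∈ APts ν} =
      Set.Iic (rowMax ν y - x) := by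
    ext k
    simp only [Set.mem_setOf_eq, mem_APts, Set.mem_Iic]
    omega
  rw [this, csSup_Iic]

/-- Nu-paths in terms of row maxima. -/
theorem isNuPath_iff (ν μ : List Bool) : IsNuPath ν μ ↔
    μ.count false = ν.count false ∧ μ.count true = ν.count true ∧
      ∀ s, s <+: μ → s.count false ≤ rowMax ν (s.count true) := by
  unfold IsNuPath eastSteps northSteps
  constructor
  · rintro ⟨h1, h2, h3⟩
    refine ⟨h1, h2, fun s hs => ?_⟩
    have := h3 s.length hs.length_le
    rw [pointAt, mem_APts, ← List.prefix_iff_eq_take.1 hs] at this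
    exact this.1
  · rintro ⟨h1, h2, h3⟩
    refine ⟨h1, h2, fun i _ => ?_⟩
    rw [pointAt, mem_APts]
    refine ⟨h3 _ (List.take_prefix i μ), ?_⟩
    rw [← h2]
    exact (List.take_sublist i μ).count_le true

/-! ### Path words lie above canopy words -/

theorem prefix_append_cases {s a b : List Bool} (h : s <+: a ++ b) :
    s <+: a ∨ ∃ t, t <+: b ∧ s = a ++ t := by
  obtain ⟨r, hr⟩ := h
  rcases List.append_eq_append_iff.1 hr with ⟨t, h1, h2⟩ | ⟨t, h1, h2⟩
  · exact Or.inl ⟨t, h1.symm⟩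
  · exact Or.inr ⟨t, ⟨r, h2.symm⟩, h1⟩

theorem rowMax_cl (L : BTr) (w : List Bool) (k : ℕ) (hL : L.isNil = false)
    (h : k ≤ (cw L).count true) : rowMax (cl L ++ w) k = rowMax (cw L) k := by
  rw [cl_of hL, List.append_assoc]
  exact rowMax_left _ _ _ h

theorem rowMax_pl (L : BTr) (w s : List Bool) :
    rowMax (cl L ++ w) ((pl L ++ s).count true) =
      (pl L).count false + rowMax w (s.count true) := by
  rw [List.count_append, count_pl, rowMax_append, count_pl]

theorem pw_above (T : BTr) (s : List Bool) (hs : s <+: pw T) :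
    s.count false ≤ rowMax (cw T) (s.count true) := by
  induction T generalizing s with
  | nil =>
    have : s = [] := by simpa [pw] using hs
    subst this; simp
  | node L R ihL ihR =>
    rw [pw_node] at hs
    rw [cw_node]
    have key : ∀ t, t <+: pr R → s = pl L ++ t →
        s.count false ≤ rowMax (cl L ++ cr R) (s.count true) := by
      intro t ht hst
      rw [hst, rowMax_pl, List.count_append]
      apply Nat.add_le_add_left
      rcases cases_nil R with rfl | hR
      · have : t = [] := by simpa using ht
        subst this; simp
      · rw [pr_of hR, List.prefix_concat_iff] at ht
        rw [cr_of hR]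
        rcases ht with rfl | ht
        · simp [rowMax]
          rw [rowMax_full _ _ (by rw [count_pw]), count_pw]
        · have := ihR t ht
          simp [rowMax]; omega
    rcases prefix_append_cases hs with h | ⟨t, ht, hst⟩
    · rcases cases_nil L with rfl | hL
      · exact key [] List.nil_prefix (by simpa using h)
      · rw [pl_of hL, List.prefix_concat_iff, ← pl_of hL] at h
        rcases h with h | h
        · exact key [] List.nil_prefix (by simpa using h)
        · rw [rowMax_cl _ _ _ hL]
          · exact ihL s h
          · rw [← count_pw]; exact h.sublist.count_le true
    · exact key t ht hst

theorem isNuPath_pw (T : BTr) : IsNuPath (cw T) (pw T) := by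
  rw [isNuPath_iff]
  exact ⟨count_pw _ _, count_pw _ _, pw_above T⟩

/-! ### Uniqueness of the tree: a shift-reduce parser -/

/-- Consume east steps of the canopy. -/
def absorb : List BTr → BTr → List Bool → List BTr × BTr × List Bool
  | S, L, [] => (S, node L nil, [])
  | S, L, true :: w => (S, node L nil, true :: w)
  | S, L, false :: w => absorb (L :: S) nil w

/-- Run the parser along a path. -/
def runP : List BTr × BTr × List Bool → List Bool → List BTr × BTr × List Bool
  | st, [] => st
  | (L :: S, T, w), false :: μ => runP (S, node L T, w) μ
  | (S, T, true :: w), true :: μ => runP (absorb S T w) μ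
  | st, _ :: μ => runP st μ

theorem runP_east (L : BTr) (S : List BTr) (T : BTr) (w μ : List Bool) :
    runP (L :: S, T, w) (false :: μ) = runP (S, node L T, w) μ := by
  simp [runP]

theorem runP_north (S : List BTr) (T : BTr) (w μ : List Bool) :
    runP (S, T, true :: w) (true :: μ) = runP (absorb S T w) μ := by
  simp [runP]

def Closed (v : List Bool) : Prop := v = [] ∨ ∃ w, v = true :: w

theorem runP_pw (T : BTr) (hT : T.isNil = false) (S : List BTr) (v μ : List Bool)
    (hv : Closed v) :
    runP (absorb S nil (cw T ++ v)) (pw T ++ μ) = runP (S, T, v) μ := by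
  induction T generalizing S v μ with
  | nil => simp [isNil] at hT
  | node L R ihL ihR =>
    have h1 : runP (absorb S nil (cw (node L R) ++ v)) (pw (node L R) ++ μ) =
        runP (absorb S L (cr R ++ v)) (pr R ++ μ) := by
      rw [cw_node, pw_node]
      rcases cases_nil L with rfl | hL
      · simp
      · rw [cl_of hL, pl_of hL]
        have := ihL hL S (true :: (cr R ++ v)) (true :: (pr R ++ μ)) (Or.inr ⟨_, rfl⟩)
        simp only [List.append_assoc, List.cons_append, List.nil_append]
        rw [this, runP_north]
    rw [h1]
    rcases cases_nil R with rfl | hR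
    · rcases hv with rfl | ⟨w, rfl⟩ <;> simp [absorb]
    · rw [cr_of hR, pr_of hR]
      simp only [List.append_assoc, List.cons_append, List.nil_append, absorb]
      rw [ihR hR _ _ _ hv, runP_east]

theorem tree_unique {T T' : BTr} (hT : T.isNil = false) (hT' : T'.isNil = false)
    (hc : cw T = cw T') (hp : pw T = pw T') : T = T' := by
  have h := runP_pw T hT [] [] [] (Or.inl rfl)
  have h' := runP_pw T' hT' [] [] [] (Or.inl rfl)
  rw [hc, hp, h'] at h
  simp [runP] at h
  exact h.symm

/-! ### Existence of the tree -/

def pstack : List BTr → List Bool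
  | [] => []
  | L :: S => pstack S ++ pl L

def cstack : List BTr → List Bool
  | [] => []
  | L :: S => cstack S ++ (cl L ++ [false])

theorem stack_true (S : List BTr) : (pstack S).count true = (cstack S).count true := by
  induction S with
  | nil => rfl
  | cons L S ih => simp [pstack, cstack, List.count_append, count_pl, ih]

theorem stack_false (S : List BTr) :
    (pstack S).count false + S.length = (cstack S).count false := by
  induction S with
  | nil => rfl
  | cons L S ih => simp [pstack, cstack, List.count_append, count_pl, ← ih]; omega

theorem absorb_exists (w : List Bool) (S : List BTr) (L : BTr) :
    ∃ S' T' w', T'.isNil = false ∧ Closed w' ∧ pstack S ++ pl L = pstack S' ++ pw T' ∧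
      cstack S ++ cl L ++ w = cstack S' ++ cw T' ++ w' := by
  induction w generalizing S L with
  | nil => exact ⟨S, node L nil, [], rfl, Or.inl rfl, by simp [pw_node], by simp [cw_node]⟩
  | cons b w ih =>
    cases b
    · obtain ⟨S', T', w', h1, h2, h3, h4⟩ := ih (L :: S) nil
      refine ⟨S', T', w', h1, h2, ?_, ?_⟩
      · simpa [pstack] using h3
      · simpa [cstack] using h4
    · exact ⟨S, node L nil, true :: w, rfl, Or.inr ⟨w, rfl⟩, by simp [pw_node],
        by simp [cw_node]⟩

theorem parse_exists (ν μ : List Bool) (h : IsNuPath ν μ) (s : List Bool) :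
    s <+: μ → ∃ S T w, T.isNil = false ∧ Closed w ∧ s = pstack S ++ pw T ∧
      ν = cstack S ++ cw T ++ w := by
  rw [isNuPath_iff] at h
  obtain ⟨h1, h2, h3⟩ := h
  induction s using List.reverseRecOn with
  | nil =>
    intro _
    obtain ⟨S', T', w', a, b, c, d⟩ := absorb_exists ν [] nil
    exact ⟨S', T', w', a, b, by simpa [pstack] using c, by simpa [cstack] using d⟩
  | append_singleton s b ih =>
    intro hs
    obtain ⟨S, T, w, hT, hw, hsp, hν⟩ := ih ((List.prefix_append s [b]).trans hs)
    cases b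
    · have h := h3 _ hs
      have hr : rowMax ν (s.count true) = (cstack S ++ cw T).count false := by
        have e : s.count true = (cstack S ++ cw T).count true + 0 := by
          rw [hsp]; simp [List.count_append, count_pw, stack_true]
        rw [e, hν, rowMax_append]
        rcases hw with rfl | ⟨w, rfl⟩ <;> simp [rowMax]
      have e2 : s.count false + S.length = (cstack S ++ cw T).count false := by
        rw [hsp]; simp [List.count_append, count_pw, ← stack_false]; omega
      rw [List.count_append, List.count_append] at h
      simp at h
      cases S with
      | nil => simp at e2; simp [hr] at h; omega
      | cons L S =>
        refine ⟨S, node L T, w, rfl, hw, ?_, ?_⟩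
        · rw [hsp]; simp [pstack, pw_node, pr_of hT]
        · rw [hν]; simp [cstack, cw_node, cr_of hT]
    · rcases hw with rfl | ⟨w, rfl⟩
      · have hc := hs.sublist.count_le true
        rw [h2, hν, List.count_append, hsp] at hc
        simp [List.count_append, count_pw, stack_true] at hc
      · obtain ⟨S', T', w', a, b, c, d⟩ := absorb_exists w S T
        refine ⟨S', T', w', a, b, ?_, ?_⟩
        · rw [← c, hsp, pl_of hT, List.append_assoc]
        · rw [← d, hν, cl_of hT]; simp

theorem tree_exists (ν μ : List Bool) (h : IsNuPath ν μ) :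
    ∃ T : BTr, T.isNil = false ∧ cw T = ν ∧ pw T = μ := by
  obtain ⟨S, T, w, hT, hw, hμ, hν⟩ := parse_exists ν μ h μ (List.prefix_refl μ)
  rw [isNuPath_iff] at h
  obtain ⟨h1, h2, -⟩ := h
  have hS := stack_false S
  have hS' := stack_true S
  rw [hμ, hν] at h1 h2
  simp only [List.count_append, count_pw] at h1 h2
  have hw' : w = [] := by
    rcases hw with rfl | ⟨w, rfl⟩
    · rfl
    · simp at h2; omega
  subst hw'
  have : S = [] := List.length_eq_zero_iff.1 (by simp at h1; omega)
  subst this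
  exact ⟨T, hT, by simpa [cstack] using hν.symm, by simpa [pstack] using hμ.symm⟩

/-! ### Rotations -/

/-- Canopy-preserving rotation, with the induced decomposition of the path word. -/
inductive RotD : BTr → BTr → List Bool → List Bool → List Bool → Prop
  | base (A B C : BTr) (hB : B.isNil = false) :
      RotD (node (node A B) C) (node A (node B C)) (pl A ++ pw B) (pr C) []
  | left {T T' : BTr} {a c d : List Bool} (X : BTr) (h : RotD T T' a c d) :
      RotD (node T X) (node T' X) a c (d ++ true :: pr X)
  | right {T T' : BTr} {a c d : List Bool} (X : BTr) (h : RotD T T' a c d) :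
      RotD (node X T) (node X T') (pl X ++ a) c (d ++ [false])

def Rot (T T' : BTr) : Prop := ∃ a c d, RotD T T' a c d

theorem RotD.notNil {T T' a c d} (h : RotD T T' a c d) :
    T.isNil = false ∧ T'.isNil = false := by
  cases h <;> exact ⟨rfl, rfl⟩

theorem RotD.cw_eq {T T' a c d} (h : RotD T T' a c d) : cw T' = cw T := by
  induction h with
  | base A B C hB =>
    simp [cw_node, cl_of (isNil_node _ _), cr_of (isNil_node _ _), cl_of hB, cr_of hB]
  | left X h ih => simp [cw_node, cl_of h.notNil.1, cl_of h.notNil.2, ih]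
  | right X h ih => simp [cw_node, cr_of h.notNil.1, cr_of h.notNil.2, ih]

theorem RotD.pw_left {T T' a c d} (h : RotD T T' a c d) :
    pw T = a ++ false :: true :: (c ++ d) := by
  induction h with
  | base A B C hB =>
    simp [pw_node, pl_of (isNil_node _ _), pr_of hB]
  | left X h ih => simp [pw_node, pl_of h.notNil.1, ih]
  | right X h ih => simp [pw_node, pr_of h.notNil.1, ih]

theorem RotD.pw_right {T T' a c d} (h : RotD T T' a c d) :
    pw T' = a ++ true :: (c ++ false :: d) := by
  induction h with
  | base A B C hB =>
    simp [pw_node, pr_of (isNil_node _ _), pl_of hB]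
  | left X h ih => simp [pw_node, pl_of h.notNil.2, ih]
  | right X h ih => simp [pw_node, pr_of h.notNil.2, ih]

theorem RotD.mirror {T T' a c d} (h : RotD T T' a c d) : Rot T'.mirror T.mirror := by
  induction h with
  | base A B C hB => exact ⟨_, _, _, RotD.base _ _ _ (by simpa using hB)⟩
  | left X h ih => obtain ⟨_, _, _, ih⟩ := ih; exact ⟨_, _, _, RotD.right _ ih⟩
  | right X h ih => obtain ⟨_, _, _, ih⟩ := ih; exact ⟨_, _, _, RotD.left _ ih⟩

/-- Signed horizontal distance of the end of `s` from `w`. -/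
def hdist (w s : List Bool) : ℤ := (rowMax w (s.count true) : ℤ) - s.count false

theorem hdist_left (T X : BTr) (hT : T.isNil = false) (s : List Bool) (hs : s <+: pw T) :
    hdist (cw (node T X)) s = hdist (cw T) s := by
  unfold hdist
  rw [cw_node, rowMax_cl _ _ _ hT]
  rw [← count_pw]; exact hs.sublist.count_le true

theorem hdist_right (X T : BTr) (hT : T.isNil = false) (s : List Bool) :
    hdist (cw (node X T)) (pl X ++ s) = hdist (cw T) s + 1 := by
  unfold hdist
  rw [cw_node, rowMax_pl, List.count_append, cr_of hT]
  simp [rowMax]; ring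

theorem hdist_end (T : BTr) : hdist (cw T) (pw T) = 0 := by
  unfold hdist
  rw [rowMax_full _ _ (by rw [count_pw]), count_pw]; simp

theorem hdist_nonneg (T : BTr) (s : List Bool) (hs : s <+: pw T) : 0 ≤ hdist (cw T) s := by
  have := pw_above T s hs
  unfold hdist; omega

theorem hdist_concat_false (w s : List Bool) : hdist w (s ++ [false]) = hdist w s - 1 := by
  unfold hdist
  simp [List.count_append]; ring

theorem RotD.dist {T T' a c d} (h : RotD T T' a c d) :
    hdist (cw T) (a ++ false :: true :: c) = hdist (cw T) (a ++ [false]) ∧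
    ∀ c', c' <+: c → c' ≠ c →
      hdist (cw T) (a ++ [false]) < hdist (cw T) (a ++ false :: true :: c') := by
  induction h with
  | base A B C hB =>
    have e0 : hdist (cw (node (node A B) C)) (pl A ++ pw B ++ [false]) = 0 := by
      have : pl A ++ pw B ++ [false] = pw (node A B) := by simp [pw_node, pr_of hB]
      rw [this, hdist_left _ _ rfl _ (List.prefix_refl _), hdist_end]
    have e1 : ∀ c', pl A ++ pw B ++ false :: true :: c' = pl (node A B) ++ c' := by
      intro c'; simp [pw_node, pl_of (isNil_node _ _), pr_of hB]
    rw [e0]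
    simp only [e1]
    refine ⟨?_, ?_⟩
    · rw [← pw_node, hdist_end]
    · intro c' hc hne
      rcases cases_nil C with rfl | hC
      · simp at hc; exact absurd (by simpa using hc) hne
      · rw [hdist_right _ _ hC]
        rw [pr_of hC, List.prefix_concat_iff] at hc
        rcases hc with rfl | hc
        · exact absurd (pr_of hC).symm hne
        · have := hdist_nonneg C c' hc
          omega
  | @left T T' a c d X h ih =>
    have hp := h.pw_left
    have q1 : a ++ [false] <+: pw T := ⟨true :: (c ++ d), by simp [hp]⟩
    have q2 : ∀ c', c' <+: c → a ++ false :: true :: c' <+: pw T := by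
      rintro c' ⟨t, rfl⟩
      exact ⟨t ++ d, by simp [hp]⟩
    refine ⟨?_, fun c' hc hne => ?_⟩
    · rw [hdist_left _ _ h.notNil.1 _ q1,
        hdist_left _ _ h.notNil.1 _ (q2 c (List.prefix_refl c))]
      exact ih.1
    · rw [hdist_left _ _ h.notNil.1 _ q1, hdist_left _ _ h.notNil.1 _ (q2 c' hc)]
      exact ih.2 c' hc hne
  | right X h ih =>
    simp only [List.append_assoc, hdist_right _ _ h.notNil.1]
    refine ⟨by rw [ih.1], fun c' hc hne => ?_⟩
    have := ih.2 c' hc hne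
    omega

/-- Every valley of a path word comes from a rotation. -/
theorem valley_rot (T : BTr) (a b : List Bool) (h : pw T = a ++ false :: true :: b) :
    ∃ T' c d, RotD T T' a c d ∧ b = c ++ d := by
  induction T generalizing a b with
  | nil => simp [pw] at h
  | node L R ihL ihR =>
    have key : ∀ t, a = pl L ++ t → pr R = t ++ false :: true :: b →
        ∃ T' c d, RotD (node L R) T' a c d ∧ b = c ++ d := by
      intro t hat ht
      rcases cases_nil R with rfl | hR
      · simp at ht
      · rw [pr_of hR] at ht
        rcases List.eq_nil_or_concat b with rfl | ⟨b', x, rfl⟩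
        · have := congrArg List.getLast? ht
          simp at this
        · have ht' : pw R ++ [false] = (t ++ false :: true :: b') ++ [x] := by simpa using ht
          obtain ⟨e1, e2⟩ := List.append_inj' ht' rfl
          obtain ⟨T', c, d, hr, hb⟩ := ihR t b' e1
          refine ⟨_, _, _, hat ▸ RotD.right L hr, ?_⟩
          simp at e2
          simp [hb, e2]
    rw [pw_node] at h
    rcases cases_nil L with rfl | hL
    · exact key a (by simp) (by simpa using h)
    · have h' := h
      rw [pl_of hL] at h
      rcases List.append_eq_append_iff.1 h with ⟨t, h1, h2⟩ | ⟨t, h1, h2⟩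
      · exact key t (by rw [pl_of hL, h1]) h2
      · -- `h1 : pw L ++ [true] = a ++ t`, `h2 : false :: true :: b = t ++ pr R`
        match t, h1, h2 with
        | [], h1, h2 => exact key [] (by rw [pl_of hL]; simpa using h1.symm) (by simpa using h2.symm)
        | [x], h1, h2 =>
          simp at h2
          obtain ⟨rfl, h2⟩ := h2
          have := (List.append_inj' h1 rfl).2
          simp at this
        | x :: y :: t', h1, h2 =>
          simp at h2
          obtain ⟨rfl, rfl, h2⟩ := h2
          rcases List.eq_nil_or_concat t' with rfl | ⟨t'', z, rfl⟩
          · have e : pw L ++ [true] = (a ++ [false]) ++ [true] := by simpa using h1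
            have e := (List.append_inj' e rfl).1
            cases L with
            | nil => simp [isNil] at hL
            | node A B =>
              rw [pw_node] at e
              rcases cases_nil B with rfl | hB
              · rcases cases_nil A with rfl | hA
                · simp at e
                · rw [pl_of hA] at e
                  have := congrArg List.getLast? e
                  simp at this
              · rw [pr_of hB, ← List.append_assoc] at e
                have e := (List.append_inj' e rfl).1
                subst e
                exact ⟨_, _, _, RotD.base A B R hB, by simpa using h2⟩
          · have e : pw L ++ [true] = (a ++ false :: true :: t'') ++ [z] := by simpa using h1
            obtain ⟨e, e2⟩ := List.append_inj' e rfl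
            obtain ⟨T', c, d, hr, hb⟩ := ihL _ _ e
            refine ⟨_, _, _, RotD.left R hr, ?_⟩
            simp at e2
            rw [h2, hb, ← e2]; simp

/-! ### Covers are rotations -/

theorem horiz_pointAt (T : BTr) (s : List Bool) (hs : s <+: pw T) :
    (horiz (cw T) (pointAt (pw T) s.length) : ℤ) = hdist (cw T) s := by
  have h := (isNuPath_pw T).2.2 s.length hs.length_le
  have e := (List.prefix_iff_eq_take.1 hs).symm
  rw [pointAt, e] at h ⊢
  rw [horiz_eq _ _ _ h]
  rw [mem_APts] at h
  unfold hdist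
  omega

/-- The index conditions in the definition of a cover hold for a rotation. -/
theorem RotD.horiz_facts {T T' a c d} (h : RotD T T' a c d) :
    horiz (cw T) (pointAt (pw T) (a.length + 2 + c.length)) =
      horiz (cw T) (pointAt (pw T) (a.length + 1)) ∧
    ∀ k, a.length + 1 < k → k < a.length + 2 + c.length →
      horiz (cw T) (pointAt (pw T) k) ≠ horiz (cw T) (pointAt (pw T) (a.length + 1)) := by
  have hp := h.pw_left
  have q1 : a ++ [false] <+: pw T := ⟨true :: (c ++ d), by simp [hp]⟩
  have q2 : ∀ c', c' <+: c → a ++ false :: true :: c' <+: pw T := by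
    rintro c' ⟨t, rfl⟩
    exact ⟨t ++ d, by simp [hp]⟩
  have f1 := horiz_pointAt T _ q1
  have f2 := fun c' hc => horiz_pointAt T _ (q2 c' hc)
  simp only [List.length_append, List.length_cons, List.length_nil] at f1 f2
  obtain ⟨d1, d2⟩ := h.dist
  refine ⟨?_, fun k hk1 hk2 => ?_⟩
  · have f3 := f2 c (List.prefix_refl c)
    rw [d1, ← f1] at f3
    have : a.length + 2 + c.length = a.length + (c.length + 1 + 1) := by omega
    rw [this]
    exact_mod_cast f3
  · obtain ⟨j, rfl⟩ : ∃ j, k = a.length + (j + 1 + 1) := ⟨k - a.length - 2, by omega⟩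
    have hl : (c.take j).length = j := by rw [List.length_take]; omega
    have f3 := f2 (c.take j) (List.take_prefix j c)
    have hne : c.take j ≠ c := by
      intro e
      rw [e] at hl; omega
    have := d2 _ (List.take_prefix j c) hne
    rw [hl] at f3
    rw [← f3, ← f1] at this
    intro e
    rw [e] at this
    exact lt_irrefl _ this

theorem cover_of_rot {T T' : BTr} (h : Rot T T') : TamariCover (cw T) (pw T) (pw T') := by
  obtain ⟨a, c, d, h⟩ := h
  refine ⟨isNuPath_pw T, h.cw_eq ▸ isNuPath_pw T', a.length + 1, a.length + 2 + c.length,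
    by omega, by omega, ?_, ?_, ?_, h.horiz_facts.1, h.horiz_facts.2, ?_⟩
  · rw [h.pw_left]; simp; omega
  · rw [h.pw_left]; simp
  · rw [h.pw_left]; simp
  · rw [h.pw_left, h.pw_right]
    have e1 : a ++ false :: true :: (c ++ d) = (a ++ [false]) ++ (true :: (c ++ d)) := by simp
    have e2 : a ++ false :: true :: (c ++ d) = (a ++ false :: true :: c) ++ d := by simp
    have g1 : (a ++ false :: true :: (c ++ d)).take (a.length + 1 - 1) = a := by simp
    have g2 : (a ++ false :: true :: (c ++ d)).drop (a.length + 1) = true :: (c ++ d) := by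
      rw [e1]; exact List.drop_left' (by simp)
    have g3 : (a ++ false :: true :: (c ++ d)).drop (a.length + 2 + c.length) = d := by
      rw [e2]; exact List.drop_left' (by simp; omega)
    have g4 : (true :: (c ++ d)).take (a.length + 2 + c.length - (a.length + 1)) = true :: c := by
      rw [← List.cons_append]; exact List.take_left' (by simp; omega)
    rw [g1, g2, g3, g4]; simp

theorem rot_of_cover {T : BTr} {μ' : List Bool} (h : TamariCover (cw T) (pw T) μ') :
    ∃ T', Rot T T' ∧ pw T' = μ' := by
  obtain ⟨-, -, i, j, hi, hij, hj, hE, hN, heq, hne, hμ⟩ := h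
  obtain ⟨i, rfl⟩ : ∃ i', i = i' + 1 := ⟨i - 1, by omega⟩
  have hlen1 : i < (pw T).length := by omega
  have hlen2 : i + 1 < (pw T).length := by omega
  have hsplit : pw T = (pw T).take i ++ false :: true :: (pw T).drop (i + 2) := by
    conv_lhs => rw [← List.take_append_drop i (pw T)]
    rw [List.drop_eq_getElem_cons hlen1, List.drop_eq_getElem_cons hlen2]
    rw [Nat.add_sub_cancel, List.getD_eq_getElem _ _ hlen1] at hE
    rw [List.getD_eq_getElem _ _ hlen2] at hN
    rw [hE, hN]
  obtain ⟨T', c, d, hr, hb⟩ := valley_rot T _ _ hsplit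
  refine ⟨T', ⟨_, _, _, hr⟩, ?_⟩
  have hla : ((pw T).take i).length = i := by rw [List.length_take]; omega
  have hf := hr.horiz_facts
  rw [hla] at hf
  have hjj : j = i + 2 + c.length := by
    rcases lt_trichotomy j (i + 2 + c.length) with hlt | he | hgt
    · exact absurd heq (hf.2 j hij hlt)
    · exact he
    · exact absurd hf.1 (hne _ (by omega) hgt)
  rw [hμ, hr.pw_right]
  have hp := hr.pw_left
  generalize (pw T).take i = a at *
  have e1 : a ++ false :: true :: (c ++ d) = (a ++ [false]) ++ (true :: (c ++ d)) := by simp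
  have e2 : a ++ false :: true :: (c ++ d) = (a ++ false :: true :: c) ++ d := by simp
  have g1 : (a ++ false :: true :: (c ++ d)).take (i + 1 - 1) = a := by
    exact List.take_left' (by simp [hla])
  have g2 : (a ++ false :: true :: (c ++ d)).drop (i + 1) = true :: (c ++ d) := by
    rw [e1]; exact List.drop_left' (by simp [hla])
  have g3 : (a ++ false :: true :: (c ++ d)).drop j = d := by
    rw [e2]; exact List.drop_left' (by simp [hla]; omega)
  have g4 : (true :: (c ++ d)).take (j - (i + 1)) = true :: c := by
    rw [← List.cons_append]; exact List.take_left' (by simp; omega)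
  rw [hp, g1, g2, g3, g4]; simp

theorem tamariLE_iff {T T' : BTr} (hT : T.isNil = false) (hT' : T'.isNil = false)
    (hc : cw T' = cw T) :
    TamariLE (cw T) (pw T) (pw T') ↔ Relation.ReflTransGen Rot T T' := by
  constructor
  · intro h
    have key : ∀ μ, TamariLE (cw T) (pw T) μ →
        ∃ U : BTr, U.isNil = false ∧ cw U = cw T ∧ pw U = μ ∧ Relation.ReflTransGen Rot T U := by
      intro μ h
      induction h with
      | refl => exact ⟨T, hT, rfl, rfl, Relation.ReflTransGen.refl⟩
      | tail _ h2 ih =>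
        obtain ⟨U, hU, hUc, rfl, hTU⟩ := ih
        rw [← hUc] at h2
        obtain ⟨V, hUV, hV⟩ := rot_of_cover h2
        obtain ⟨a, c, d, hr⟩ := id hUV
        exact ⟨V, hr.notNil.2, hr.cw_eq.trans hUc, hV, hTU.tail hUV⟩
    obtain ⟨U, hU, hUc, hUp, hTU⟩ := key _ h
    have : U = T' := tree_unique hU hT' (hUc.trans hc.symm) hUp
    exact this ▸ hTU
  · intro h
    clear hT' hc
    have : cw T' = cw T ∧ TamariLE (cw T) (pw T) (pw T') := by
      induction h with
      | refl => exact ⟨rfl, Relation.ReflTransGen.refl⟩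
      | tail _ h2 ih =>
        obtain ⟨a, c, d, hr⟩ := id h2
        have := cover_of_rot h2
        rw [ih.1] at this
        exact ⟨hr.cw_eq.trans ih.1, Relation.ReflTransGen.tail ih.2 this⟩
    exact this.2

theorem rot_mirror {T T' : BTr} (h : Relation.ReflTransGen Rot T T') :
    Relation.ReflTransGen Rot T'.mirror T.mirror := by
  induction h with
  | refl => exact Relation.ReflTransGen.refl
  | tail _ h2 ih =>
    obtain ⟨a, c, d, hr⟩ := h2
    exact Relation.ReflTransGen.head hr.mirror ih

theorem rot_mirror_iff {T T' : BTr} :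
    Relation.ReflTransGen Rot T T' ↔ Relation.ReflTransGen Rot T'.mirror T.mirror :=
  ⟨rot_mirror, fun h => by simpa using rot_mirror h⟩

theorem tamari_dual_of_reverse (ν : List Bool) :
    ∃ e : List Bool → List Bool,
      Set.BijOn e {μ | IsNuPath ν μ} {μ | IsNuPath (revPath ν) μ} ∧
      ∀ μ μ', IsNuPath ν μ → IsNuPath ν μ' →
        (TamariLE ν μ μ' ↔ TamariLE (revPath ν) (e μ') (e μ)) := by
  have hex : ∀ μ : List Bool, ∃ T : BTr, IsNuPath ν μ → T.isNil = false ∧ cw T = ν ∧ pw T = μ := by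
    intro μ
    by_cases h : IsNuPath ν μ
    · obtain ⟨T, hT⟩ := tree_exists ν μ h
      exact ⟨T, fun _ => hT⟩
    · exact ⟨nil, fun h' => absurd h' h⟩
  choose t ht using hex
  refine ⟨fun μ => pw (t μ).mirror, ⟨?_, ?_, ?_⟩, ?_⟩
  · intro μ hμ
    obtain ⟨h1, h2, h3⟩ := ht μ hμ
    have := isNuPath_pw (t μ).mirror
    rw [cw_mirror, h2] at this
    exact this
  · intro μ hμ μ' hμ' he
    obtain ⟨h1, h2, h3⟩ := ht μ hμ
    obtain ⟨h1', h2', h3'⟩ := ht μ' hμ'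
    have : (t μ).mirror = (t μ').mirror :=
      tree_unique (by simpa using h1) (by simpa using h1')
        (by rw [cw_mirror, cw_mirror, h2, h2']) he
    have := congrArg mirror this
    rw [mirror_mirror, mirror_mirror] at this
    rw [← h3, ← h3', this]
  · intro μ hμ
    obtain ⟨T, h1, h2, h3⟩ := tree_exists _ _ hμ
    have hc : cw T.mirror = ν := by
      rw [cw_mirror, h2]
      simp [revPath, Function.comp_def]
    have hm : IsNuPath ν (pw T.mirror) := hc ▸ isNuPath_pw T.mirror
    obtain ⟨g1, g2, g3⟩ := ht _ hm
    refine ⟨pw T.mirror, hm, ?_⟩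
    have : t (pw T.mirror) = T.mirror :=
      tree_unique g1 (by simpa using h1) (g2.trans hc.symm) g3
    simp only [this, mirror_mirror, h3]
  · intro μ μ' hμ hμ'
    obtain ⟨h1, h2, h3⟩ := ht μ hμ
    obtain ⟨h1', h2', h3'⟩ := ht μ' hμ'
    have e1 := tamariLE_iff h1 h1' (h2'.trans h2.symm)
    have e2 := tamariLE_iff (T := (t μ').mirror) (T' := (t μ).mirror)
      (by simpa using h1') (by simpa using h1) (by rw [cw_mirror, cw_mirror, h2, h2'])
    rw [h2, h3, h3'] at e1
    rw [cw_mirror, h2'] at e2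
    rw [e1, rot_mirror_iff, e2]
end

section
/- Let ν be a lattice path with m east and n north steps and ℓ = m+n. The map T ↦ b(T) is a bijection from the set of ν-trees onto the set of ν-bracket vectors, and the map μ ↦ b(μ) is a bijection from the set of ν-paths onto the set of ν-bracket vectors. -/
open scoped Classical

def hgt (ν : List Bool) (i : ℕ) : ℕ := (ν.take i).count true
def absc (ν : List Bool) (i : ℕ) : ℕ := (ν.take i).count false

lemma hgt_zero (ν : List Bool) : hgt ν 0 = 0 := by simp [hgt]

lemma hgt_length (ν : List Bool) : hgt ν ν.length = northSteps ν := by simp [hgt, northSteps]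

lemma hgt_succ (ν : List Bool) (i : ℕ) (hi : i < ν.length) :
    hgt ν (i+1) = hgt ν i + if ν[i] = true then 1 else 0 := by
  unfold hgt
  rw [List.take_add_one, List.getElem?_eq_getElem hi]
  simp only [Option.toList_some, List.count_append]
  cases ν[i] <;> simp

lemma hgt_mono (ν : List Bool) {i j : ℕ} (h : i ≤ j) : hgt ν i ≤ hgt ν j :=
  (List.take_sublist_take_left h).count_le true

lemma absc_mono (ν : List Bool) {i j : ℕ} (h : i ≤ j) : absc ν i ≤ absc ν j :=
  (List.take_sublist_take_left h).count_le false

lemma absc_add_hgt (ν : List Bool) {i : ℕ} (h : i ≤ ν.length) : absc ν i + hgt ν i = i := by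
  have := List.count_false_add_count_true (ν.take i)
  simp only [List.length_take] at this
  unfold absc hgt; omega

lemma east_add_north (ν : List Bool) : eastSteps ν + northSteps ν = ν.length :=
  List.count_false_add_count_true ν

lemma hgt_succ_le (ν : List Bool) (i : ℕ) (hi : i < ν.length) : hgt ν (i+1) ≤ hgt ν i + 1 := by
  rw [hgt_succ ν i hi]; split <;> omega

lemma hgt_le_north (ν : List Bool) {i : ℕ} : hgt ν i ≤ northSteps ν :=
  (List.take_sublist i ν).count_le true

lemma absc_le_east (ν : List Bool) {i : ℕ} : absc ν i ≤ eastSteps ν :=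
  (List.take_sublist i ν).count_le false

lemma fpos_spec (ν : List Bool) {k : ℕ} (hk : k ≤ northSteps ν) :
    fpos ν k ≤ ν.length ∧ hgt ν (fpos ν k) = k := by
  have hne : {i | i ≤ ν.length ∧ (ν.take i).count true = k}.Nonempty := by
    set i := Nat.findGreatest (fun i => hgt ν i ≤ k) ν.length with hi
    have h1 : i ≤ ν.length := Nat.findGreatest_le _
    have h2 : hgt ν i ≤ k := by
      have := @Nat.findGreatest_spec 0 (fun i => hgt ν i ≤ k) _ ν.length (Nat.zero_le _)
        (by simp [hgt_zero])
      exact this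
    refine ⟨i, h1, ?_⟩
    change hgt ν i = k
    rcases h1.lt_or_eq with h | h
    · have h3 : ¬ hgt ν (i+1) ≤ k := by
        refine
        Nat.findGreatest_is_greatest (P := fun i => hgt ν i ≤ k) (k := i+1) (n := ν.length) ?_ ?_ <;> omega
      have := hgt_succ_le ν i h
      omega
    · rw [h, hgt_length] at h2 ⊢; omega
  have := Nat.sSup_mem hne ⟨ν.length, fun i hi => hi.1⟩
  exact this

lemma hgt_le_iff (ν : List Bool) {i k : ℕ} (hi : i ≤ ν.length) (hk : k ≤ northSteps ν) :
    hgt ν i ≤ k ↔ i ≤ fpos ν k := by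
  obtain ⟨h1, h2⟩ := fpos_spec ν hk
  constructor
  · intro h
    by_contra hlt
    have := hgt_mono ν (show fpos ν k ≤ i by omega)
    have h3 : i ≤ fpos ν k := le_csSup (s := {i | i ≤ ν.length ∧ (ν.take i).count true = k})
      ⟨ν.length, fun i hi => hi.1⟩ ⟨hi, show hgt ν i = k by omega⟩
    omega
  · intro h
    have := hgt_mono ν h
    omega

lemma fpos_lt (ν : List Bool) {j k : ℕ} (hjk : j < k) (hk : k ≤ northSteps ν) :
    fpos ν j < fpos ν k := by
  obtain ⟨h1, h2⟩ := fpos_spec ν hk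
  have := (hgt_le_iff ν h1 (show j ≤ northSteps ν by omega)).not
  omega

lemma fpos_north (ν : List Bool) : fpos ν (northSteps ν) = ν.length := by
  have h1 := (fpos_spec ν le_rfl).1
  have h2 := (hgt_le_iff ν (le_refl ν.length) le_rfl).1 (hgt_le_north ν)
  omega

lemma heightAt_spec (ν : List Bool) : ∀ x ≤ eastSteps ν, x + heightAt ν x ≤ ν.length ∧
    absc ν (x + heightAt ν x) = x ∧ hgt ν (x + heightAt ν x) = heightAt ν x := by
  induction ν with
  | nil =>
    intro x hx
    have : x = 0 := by simpa [eastSteps] using hx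
    subst this
    simp [heightAt, absc, hgt]
  | cons s r ih =>
    intro x hx
    cases x with
    | zero => simp [heightAt, absc, hgt]
    | succ x =>
      cases s with
      | true =>
        have := ih (x+1) (by simpa [eastSteps] using hx)
        simp only [heightAt]
        rw [show x + 1 + (heightAt r (x+1) + 1) = (x + 1 + heightAt r (x+1)) + 1 by omega]
        simpa [absc, hgt] using this
      | false =>
        have := ih x (by simpa [eastSteps] using hx)
        simp only [heightAt]
        rw [show x + 1 + (heightAt r x) = (x + heightAt r x) + 1 by omega]
        simpa [absc, hgt] using this

lemma heightAt_le (ν : List Bool) : ∀ x i, x ≤ absc ν i → x + heightAt ν x ≤ i := by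
  induction ν with
  | nil =>
    intro x i hx
    have : x = 0 := by simpa [absc] using hx
    subst this
    simp [heightAt]
  | cons s r ih =>
    intro x i hx
    cases x with
    | zero => simp [heightAt]
    | succ x =>
      cases i with
      | zero => simp [absc] at hx
      | succ i =>
        cases s with
        | true =>
          have := ih (x+1) i (by simpa [absc] using hx)
          simp only [heightAt]; omega
        | false =>
          have := ih x i (by simpa [absc] using hx)
          simp only [heightAt]; omega

/-- Membership in `A_ν` in terms of the last position of height `y`. -/
lemma mem_APts_iff (ν : List Bool) (x y : ℕ) :
    (x, y) ∈ APts ν ↔ y ≤ northSteps ν ∧ x + y ≤ fpos ν y := by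
  simp only [APts, Set.mem_ofPred_eq]
  constructor
  · rintro ⟨h1, h2, h3⟩
    refine ⟨h3, ?_⟩
    obtain ⟨a, b, c⟩ := heightAt_spec ν x h1
    have h4 := (hgt_le_iff ν a h3).1 (by omega)
    obtain ⟨h5, h6⟩ := fpos_spec ν h3
    have := absc_mono ν h4
    have := absc_add_hgt ν h5
    omega
  · rintro ⟨h3, h⟩
    obtain ⟨h5, h6⟩ := fpos_spec ν h3
    have h7 := absc_add_hgt ν h5
    have h8 : x ≤ absc ν (fpos ν y) := by omega
    have h9 := heightAt_le ν _ _ h8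
    have h10 : x ≤ eastSteps ν := h8.trans (absc_le_east ν)
    obtain ⟨a, b, c⟩ := heightAt_spec ν x h10
    refine ⟨h10, ?_, h3⟩
    rw [← c, hgt_le_iff ν a h3]; exact h9

lemma mem_APts_east {ν : List Bool} {x y : ℕ} (h : (x, y) ∈ APts ν) : x ≤ eastSteps ν := h.1

lemma APts_left {ν : List Bool} {x x' y : ℕ} (h : (x, y) ∈ APts ν) (hx : x' ≤ x) :
    (x', y) ∈ APts ν := by
  rw [mem_APts_iff] at *; omega

lemma APts_up {ν : List Bool} {x y y' : ℕ} (h : (x, y) ∈ APts ν) (hy : y ≤ y')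
    (hn : y' ≤ northSteps ν) : (x, y') ∈ APts ν :=
  ⟨h.1, h.2.1.trans hy, hn⟩

def cnt (g : ℕ → ℕ) (N k : ℕ) : ℕ := ((Finset.range N).filter (fun i => g i = k)).card

lemma sum_cnt (g : ℕ → ℕ) (N k : ℕ) :
    ∑ j ∈ Finset.range k, cnt g N j = ((Finset.range N).filter (fun i => g i < k)).card := by
  induction k with
  | zero => simp
  | succ k ih =>
    rw [Finset.sum_range_succ, ih, cnt, ← Finset.card_union_of_disjoint]
    · congr 1
      ext i
      simp only [Finset.mem_union, Finset.mem_filter, Finset.mem_range]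
      grind
    · rw [Finset.disjoint_left]
      intro i
      simp only [Finset.mem_filter, Finset.mem_range]
      omega

lemma pointsAtHeight_eq (μ : List Bool) (k : ℕ) :
    pointsAtHeight μ k = cnt (hgt μ) (μ.length + 1) k := by
  unfold pointsAtHeight cnt
  rw [Finset.card_def, Finset.filter_val, Finset.range_val, Multiset.range, Multiset.filter_coe,
    Multiset.coe_card]
  rfl

/-- Admissible sequences of row counts. -/
def Adm (ν : List Bool) (c : ℕ → ℕ) : Prop :=
  (∀ k ≤ northSteps ν, 1 ≤ c k) ∧
  (∀ k ≤ northSteps ν, ∑ j ∈ Finset.range (k+1), c j ≤ fpos ν k + 1) ∧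
  ∑ j ∈ Finset.range (northSteps ν + 1), c j = ν.length + 1

lemma sum_pointsAtHeight (μ : List Bool) {k : ℕ} (hk : k ≤ northSteps μ) :
    ∑ j ∈ Finset.range (k+1), pointsAtHeight μ j = fpos μ k + 1 := by
  simp only [pointsAtHeight_eq]
  rw [sum_cnt]
  have : (Finset.range (μ.length + 1)).filter (fun i => hgt μ i < k + 1) =
      Finset.range (fpos μ k + 1) := by
    ext i
    have h1 := (fpos_spec μ hk).1
    simp only [Finset.mem_filter, Finset.mem_range]
    constructor
    · rintro ⟨a, b⟩
      have := (hgt_le_iff μ (show i ≤ μ.length by omega) hk).1 (by omega)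
      omega
    · intro a
      have := (hgt_le_iff μ (show i ≤ μ.length by omega) hk).2 (by omega)
      omega
  rw [this, Finset.card_range]

lemma nuPath_iff (ν μ : List Bool) : IsNuPath ν μ ↔ μ.length = ν.length ∧
    northSteps μ = northSteps ν ∧ ∀ i ≤ ν.length, i ≤ fpos ν (hgt μ i) := by
  have e1 := east_add_north ν
  have e2 := east_add_north μ
  have key : ∀ i ≤ μ.length, northSteps μ = northSteps ν →
      (pointAt μ i ∈ APts ν ↔ i ≤ fpos ν (hgt μ i)) := by
    intro i hi hn
    have : pointAt μ i = (absc μ i, hgt μ i) := rfl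
    rw [this, mem_APts_iff, absc_add_hgt μ hi]
    have := hgt_le_north μ (i := i)
    constructor
    · exact fun h => h.2
    · exact fun h => ⟨by omega, h⟩
  constructor
  · rintro ⟨a, b, c⟩
    have hl : μ.length = ν.length := by omega
    exact ⟨hl, b, fun i hi => (key i (by omega) b).1 (c i (by omega))⟩
  · rintro ⟨a, b, c⟩
    exact ⟨by omega, b, fun i hi => (key i hi b).2 (c i (by omega))⟩

lemma adm_of_nuPath {ν μ : List Bool} (h : IsNuPath ν μ) : Adm ν (pointsAtHeight μ) := by
  obtain ⟨a, b, c⟩ := (nuPath_iff ν μ).1 h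
  refine ⟨fun k hk => ?_, fun k hk => ?_, ?_⟩
  · obtain ⟨h1, h2⟩ := fpos_spec μ (k := k) (by omega)
    rw [pointsAtHeight_eq]
    apply Finset.card_pos.2
    exact ⟨fpos μ k, by simp [h2]; omega⟩
  · rw [sum_pointsAtHeight μ (by omega)]
    obtain ⟨h1, h2⟩ := fpos_spec μ (k := k) (by omega)
    have := c (fpos μ k) (by omega)
    rw [h2] at this; omega
  · rw [← b, sum_pointsAtHeight μ le_rfl, fpos_north, a]

lemma eq_of_hgt {μ μ' : List Bool} (hl : μ.length = μ'.length)
    (h : ∀ i ≤ μ.length, hgt μ i = hgt μ' i) : μ = μ' := by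
  apply List.ext_getElem hl
  intro i h1 h2
  have a := h i (by omega)
  have b := h (i+1) (by omega)
  rw [hgt_succ μ i h1, hgt_succ μ' i h2] at b
  cases h3 : μ[i] <;> cases h4 : μ'[i] <;> simp [h3, h4] at b ⊢ <;> omega

lemma path_eq_of_counts {μ μ' : List Bool} (hl : μ.length = μ'.length)
    (hn : northSteps μ = northSteps μ')
    (h : ∀ k ≤ northSteps μ, pointsAtHeight μ k = pointsAtHeight μ' k) : μ = μ' := by
  have hf : ∀ k ≤ northSteps μ, fpos μ k = fpos μ' k := by
    intro k hk
    have h1 := sum_pointsAtHeight μ hk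
    have h2 := sum_pointsAtHeight μ' (k := k) (by omega)
    have h3 : ∑ j ∈ Finset.range (k+1), pointsAtHeight μ j =
        ∑ j ∈ Finset.range (k+1), pointsAtHeight μ' j :=
      Finset.sum_congr rfl fun j hj => h j (by simp at hj; omega)
    omega
  apply eq_of_hgt hl
  intro i hi
  have a1 := hgt_le_north μ (i := i)
  have a2 := hgt_le_north μ' (i := i)
  apply le_antisymm
  · rw [hgt_le_iff μ hi (by omega), hf _ (by omega), ← hgt_le_iff μ' (by omega) a2]
  · rw [hgt_le_iff μ' (by omega) (by omega), ← hf _ (by omega), ← hgt_le_iff μ (by omega) a1]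

lemma exists_path_of_hgt (N : ℕ) (H : ℕ → ℕ) (h0 : H 0 = 0)
    (hs : ∀ i < N, H (i+1) = H i ∨ H (i+1) = H i + 1) :
    ∃ μ : List Bool, μ.length = N ∧ ∀ i ≤ N, hgt μ i = H i := by
  induction N with
  | zero => exact ⟨[], rfl, fun i hi => by
      have : i = 0 := by omega
      subst this; simp [hgt, h0]⟩
  | succ N ih =>
    obtain ⟨μ, h1, h2⟩ := ih fun i hi => hs i (by omega)
    refine ⟨μ ++ [decide (H (N+1) = H N + 1)], by simp [h1], fun i hi => ?_⟩
    rcases hi.lt_or_eq with h | h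
    · rw [← h2 i (by omega), hgt, List.take_append_of_le_length (by omega), hgt]
    · subst h
      rw [hgt_succ _ N (by simp [h1])]
      have : hgt (μ ++ [decide (H (N+1) = H N + 1)]) N = H N := by
        rw [← h2 N le_rfl, hgt, List.take_append_of_le_length (by omega), hgt]
      rw [this, List.getElem_append_right (by omega)]
      simp only [List.getElem_singleton, decide_eq_true_eq]
      rcases hs N (by omega) with h | h <;> split <;> omega

lemma exists_path_of_adm {ν : List Bool} {c : ℕ → ℕ} (hc : Adm ν c) :
    ∃ μ, IsNuPath ν μ ∧ ∀ k ≤ northSteps ν, pointsAtHeight μ k = c k := by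
  obtain ⟨c1, c2, c3⟩ := hc
  set S : ℕ → ℕ := fun k => ∑ j ∈ Finset.range (k+1), c j with hS
  have Sm : Monotone S := by
    intro a b hab
    exact Finset.sum_le_sum_of_subset (Finset.range_mono (by omega))
  have Ss : ∀ k, S (k+1) = S k + c (k+1) := fun k => Finset.sum_range_succ _ _
  have hex : ∀ i, i ≤ ν.length → ∃ k, i < S k := fun i hi =>
    ⟨northSteps ν, by simp only [hS]; omega⟩
  set H : ℕ → ℕ := fun i => sInf {k | i < S k} with hH
  have Hle : ∀ i ≤ ν.length, ∀ k, H i ≤ k ↔ i < S k := by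
    intro i hi k
    constructor
    · intro h
      have : i < S (H i) := Nat.sInf_mem (s := {k | i < S k}) (hex i hi)
      exact this.trans_le (Sm h)
    · intro h; exact Nat.sInf_le h
  have Hn : ∀ i ≤ ν.length, H i ≤ northSteps ν := fun i hi =>
    (Hle i hi _).2 (by simp only [hS]; omega)
  have H0 : H 0 = 0 := by
    have := (Hle 0 (by omega) 0).2 (by have := c1 0 (by omega); simp only [hS]; simp; omega)
    omega
  have Hs : ∀ i < ν.length, H (i+1) = H i ∨ H (i+1) = H i + 1 := by
    intro i hi
    have a : H i ≤ H (i+1) := (Hle i (by omega) _).2 (by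
      have := (Hle (i+1) (by omega) (H (i+1))).1 le_rfl
      omega)
    have b : H (i+1) ≤ H i + 1 := by
      rcases (Hn i (by omega)).lt_or_eq with h | h
      · rw [Hle (i+1) (by omega), Ss]
        have := (Hle i (by omega) (H i)).1 le_rfl
        have := c1 (H i + 1) (by omega)
        omega
      · have := Hn (i+1) (by omega)
        omega
    omega
  obtain ⟨μ, m1, m2⟩ := exists_path_of_hgt ν.length H H0 Hs
  have hlast : H ν.length = northSteps ν := by
    apply le_antisymm (Hn _ le_rfl)
    by_contra hlt
    have h1 := (Hle _ le_rfl (H ν.length)).1 le_rfl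
    have h2 := c2 (H ν.length) (by omega)
    have h3 := fpos_lt ν (show H ν.length < northSteps ν by omega) le_rfl
    rw [fpos_north] at h3
    simp only [hS] at h1
    omega
  have mn : northSteps μ = northSteps ν := by
    rw [← hgt_length, m1, m2 _ le_rfl, hlast]
  refine ⟨μ, ?_, ?_⟩
  · rw [nuPath_iff]
    refine ⟨m1, mn, fun i hi => ?_⟩
    rw [m2 i hi]
    have h1 := (Hle i hi (H i)).1 le_rfl
    have h2 := c2 (H i) (Hn i hi)
    simp only [hS] at h1
    omega
  · have hsum : ∀ k ≤ northSteps ν, ∑ j ∈ Finset.range (k+1), pointsAtHeight μ j = S k := by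
      intro k hk
      rw [sum_pointsAtHeight μ (by omega)]
      obtain ⟨f1, f2⟩ := fpos_spec μ (k := k) (by omega)
      have a := (Hle (fpos μ k) (by omega) k).1 (by rw [← m2 _ (by omega)]; omega)
      have b : S k ≤ ν.length + 1 := by
        have : S k ≤ S (northSteps ν) := Sm hk
        simp only [hS] at this ⊢; omega
      have d := (Hle (S k - 1) (by omega) k).2 (by omega)
      rw [← m2 _ (by omega), hgt_le_iff μ (by omega) (by omega)] at d
      omega
    intro k hk
    cases k with
    | zero => simpa [hS] using hsum 0 (by omega)
    | succ k =>
      have h1 := hsum k (by omega)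
      have h2 := hsum (k+1) hk
      rw [Finset.sum_range_succ, h1, Ss] at h2
      omega

lemma upper_eq {U R R' : Finset ℕ} (h1 : R ⊆ U) (h2 : R' ⊆ U)
    (h3 : ∀ x ∈ R, ∀ y ∈ U, x < y → y ∈ R) (h4 : ∀ x ∈ R', ∀ y ∈ U, x < y → y ∈ R')
    (hc : R.card = R'.card) : R = R' := by
  by_cases h : R ⊆ R'
  · exact Finset.eq_of_subset_of_card_le h hc.ge
  · symm
    apply Finset.eq_of_subset_of_card_le _ hc.le
    obtain ⟨x, hx, hx'⟩ := Finset.not_subset.1 h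
    intro y hy
    rcases lt_trichotomy x y with hxy | hxy | hxy
    · exact h3 x hx y (h2 hy) hxy
    · exact hxy ▸ hx
    · exact absurd (h4 y hy x (h1 hx) hxy) hx'

/-- Bracket vectors as functions. -/
structure BV (ν : List Bool) (B : ℕ → ℕ) : Prop where
  fp : ∀ k ≤ northSteps ν, B (fpos ν k) = k
  lo : ∀ i ≤ ν.length, hgt ν i ≤ B i
  hi : ∀ i ≤ ν.length, B i ≤ northSteps ν
  av : ∀ i j k, i < j → j < k → k ≤ ν.length → B i = B k → B j ≤ B i

lemma bracket_iff (ν : List Bool) (b : List ℕ) :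
    IsBracketVector ν b ↔ b.length = ν.length + 1 ∧ BV ν (fun i => b.getD i 0) := by
  have hb : ∀ i ≤ ν.length, (bmin ν).getD i 0 = hgt ν i := by
    intro i hi
    simp [bmin, List.getD_eq_getElem?_getD, hgt, show i < ν.length + 1 by omega]
  constructor
  · rintro ⟨h1, h2, h3, h4⟩
    refine ⟨h1, h2, fun i hi => ?_, fun i hi => (h3 i (by omega)).2, fun i j k hij hjk hk he => ?_⟩
    · rw [← hb i hi]; exact (h3 i (by omega)).1
    · by_contra hlt
      exact h4 i j k hij hjk (by omega) ⟨he, by simpa using hlt⟩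
  · rintro ⟨h1, h2⟩
    refine ⟨h1, h2.fp, fun i hi => ⟨?_, h2.hi i (by omega)⟩, fun i j k hij hjk hk he => ?_⟩
    · rw [hb i (by omega)]; exact h2.lo i (by omega)
    · have := h2.av i j k hij hjk (by omega) he.1
      have := he.2
      omega

lemma BV.le_fpos {ν : List Bool} {B : ℕ → ℕ} (h : BV ν B) {i : ℕ} (hi : i ≤ ν.length) :
    i ≤ fpos ν (B i) := (hgt_le_iff ν hi (h.hi i hi)).1 (h.lo i hi)

lemma BV.adm {ν : List Bool} {B : ℕ → ℕ} (h : BV ν B) : Adm ν (cnt B (ν.length + 1)) := by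
  refine ⟨fun k hk => ?_, fun k hk => ?_, ?_⟩
  · apply Finset.card_pos.2
    have := (fpos_spec ν hk).1
    exact ⟨fpos ν k, by simp [h.fp k hk]; omega⟩
  · rw [sum_cnt]
    calc _ ≤ (Finset.range (fpos ν k + 1)).card := by
          apply Finset.card_le_card
          intro i
          simp only [Finset.mem_filter, Finset.mem_range]
          rintro ⟨h1, h2⟩
          have := h.lo i (by omega)
          have := (hgt_le_iff ν (show i ≤ ν.length by omega) hk).1 (by omega)
          omega
      _ = _ := Finset.card_range _
  · rw [sum_cnt, Finset.filter_true_of_mem, Finset.card_range]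
    intro i hi
    have := h.hi i (by simp at hi; omega)
    omega

lemma BV.unique {ν : List Bool} {B B' : ℕ → ℕ} (h : BV ν B) (h' : BV ν B')
    (hc : ∀ k ≤ northSteps ν, cnt B (ν.length + 1) k = cnt B' (ν.length + 1) k) :
    ∀ i ≤ ν.length, B i = B' i := by
  have key : ∀ k, k ≤ northSteps ν → ∀ i ≤ ν.length, (B i = k ↔ B' i = k) := by
    intro k
    induction k using Nat.strong_induction_on with
    | _ k ih =>
    intro hk
    have aux : ∀ C : ℕ → ℕ, BV ν C → ∀ x ∈ (Finset.range (ν.length + 1)).filter (fun i => C i = k),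
        ∀ y ∈ (Finset.range (ν.length + 1)).filter (fun i => i ≤ fpos ν k ∧ k ≤ C i), x < y →
        y ∈ (Finset.range (ν.length + 1)).filter (fun i => C i = k) := by
      intro C hC x hx y hy hxy
      simp only [Finset.mem_filter, Finset.mem_range] at *
      refine ⟨hy.1, ?_⟩
      rcases hy.2.1.lt_or_eq with h1 | h1
      · have := hC.av x y (fpos ν k) hxy h1 (fpos_spec ν hk).1 (by rw [hC.fp k hk]; exact hx.2)
        omega
      · rw [h1, hC.fp k hk]
    have sub : ∀ C : ℕ → ℕ, BV ν C → (Finset.range (ν.length + 1)).filter (fun i => C i = k) ⊆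
        (Finset.range (ν.length + 1)).filter (fun i => i ≤ fpos ν k ∧ k ≤ C i) := by
      intro C hC x
      simp only [Finset.mem_filter, Finset.mem_range]
      rintro ⟨h1, h2⟩
      refine ⟨h1, ?_, h2.ge⟩
      have := hC.le_fpos (show x ≤ ν.length by omega)
      rwa [h2] at this
    have hU : (Finset.range (ν.length + 1)).filter (fun i => i ≤ fpos ν k ∧ k ≤ B' i) =
        (Finset.range (ν.length + 1)).filter (fun i => i ≤ fpos ν k ∧ k ≤ B i) := by
      apply Finset.filter_congr
      intro i hi
      have hi' : i ≤ ν.length := by simp at hi; omega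
      have : k ≤ B' i ↔ k ≤ B i := by
        constructor
        · intro h1
          by_contra h2
          have := (ih (B i) (by omega) (by omega) i hi').1 rfl
          omega
        · intro h1
          by_contra h2
          have := (ih (B' i) (by omega) (by omega) i hi').2 rfl
          omega
      rw [this]
    have e := upper_eq (sub B h) (hU ▸ sub B' h') (aux B h) (hU ▸ aux B' h') (hc k hk)
    intro i hi
    have := Finset.ext_iff.1 e i
    simp only [Finset.mem_filter, Finset.mem_range, show i < ν.length + 1 by omega, true_and] at this
    exact this
  intro i hi
  exact ((key (B i) (h.hi i hi) i hi).1 rfl).symm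

/-! Greedy construction -/

noncomputable def gstep (ν : List Bool) (c : ℕ → ℕ) (st : List (ℕ × ℕ) × List ℕ) (k : ℕ) :
    List (ℕ × ℕ) × List ℕ :=
  let picked := ((st.2.filter fun i => decide (i ≤ fpos ν k)).reverse).take (c k)
  (st.1 ++ picked.map fun i => (i, k), st.2.filter fun i => decide (i ∉ picked))

structure GInv (ν : List Bool) (c : ℕ → ℕ) (K : ℕ) (st : List (ℕ × ℕ) × List ℕ) : Prop where
  u : st.2 = (List.range (ν.length + 1)).filter (fun i => decide (i ∉ st.1.map Prod.fst))
  nd : (st.1.map Prod.fst).Nodup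
  bd : ∀ i k, (i, k) ∈ st.1 → k < K ∧ i ≤ fpos ν k
  ct : ∀ k < K, (st.1.map Prod.snd).count k = c k
  len : st.1.length = ∑ j ∈ Finset.range K, c j
  f : ∀ k < K, (fpos ν k, k) ∈ st.1
  av : ∀ i k, (i, k) ∈ st.1 → ∀ j, i < j → j ≤ fpos ν k → ∃ k' ≤ k, (j, k') ∈ st.1

lemma mem_take_of_gt {l : List ℕ} (hl : l.Pairwise (· > ·)) {n x y : ℕ} (hx : x ∈ l.take n)
    (hy : y ∈ l) (hxy : x < y) : y ∈ l.take n := by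
  rw [← List.take_append_drop n l] at hl hy
  rcases List.mem_append.1 hy with h | h
  · exact h
  · have := (List.pairwise_append.1 hl).2.2 x hx y h
    omega

lemma gstep_inv {ν : List Bool} {c : ℕ → ℕ} (hc : Adm ν c) {K : ℕ} (hK : K ≤ northSteps ν)
    {st : List (ℕ × ℕ) × List ℕ} (h : GInv ν c K st) : GInv ν c (K+1) (gstep ν c st K) := by
  obtain ⟨L, U⟩ := st
  obtain ⟨hu, nd, bd, ct, len, f, av⟩ := h
  simp only at hu nd bd ct len f av
  obtain ⟨fK, fK'⟩ := fpos_spec ν hK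
  set avail := U.filter (fun i => decide (i ≤ fpos ν K)) with havail
  have mem_avail : ∀ i, i ∈ avail ↔ i ≤ fpos ν K ∧ i ∉ L.map Prod.fst := by
    intro i
    rw [havail, hu]
    simp only [List.mem_filter, List.mem_range, decide_eq_true_eq]
    constructor
    · rintro ⟨⟨a, b⟩, d⟩; exact ⟨d, b⟩
    · rintro ⟨a, b⟩; exact ⟨⟨by omega, b⟩, a⟩
  have sorted : avail.Pairwise (· < ·) := by
    rw [havail, hu]
    exact (List.pairwise_lt_range.filter _).filter _
  have rsorted : avail.reverse.Pairwise (· > ·) := List.pairwise_reverse.2 sorted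
  have key_lt : ∀ i, i ∈ L.map Prod.fst → i < fpos ν K := by
    intro i hi
    obtain ⟨⟨i', k⟩, hp, rfl⟩ := List.mem_map.1 hi
    have := bd _ _ hp
    have := fpos_lt ν this.1 hK
    simp only at *; omega
  have hlen : avail.length + L.length = fpos ν K + 1 := by
    have nda : avail.Nodup := sorted.imp (fun h => by omega)
    have : (L.map Prod.fst ++ avail).Nodup := by
      rw [List.nodup_append']
      refine ⟨nd, nda, ?_⟩
      intro i hi hi'
      exact ((mem_avail i).1 hi').2 hi
    have h2 : (L.map Prod.fst ++ avail).toFinset = Finset.range (fpos ν K + 1) := by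
      ext i
      simp only [List.mem_toFinset, List.mem_append, mem_avail, Finset.mem_range]
      constructor
      · rintro (h | h)
        · have := key_lt i h; omega
        · omega
      · intro h
        by_cases h' : i ∈ L.map Prod.fst
        · exact Or.inl h'
        · exact Or.inr ⟨by omega, h'⟩
    have h3 := List.toFinset_card_of_nodup this
    rw [h2, Finset.card_range, List.length_append, List.length_map] at h3
    omega
  have hcK : c K ≤ avail.length := by
    have := hc.2.1 K hK
    rw [Finset.sum_range_succ] at this
    omega
  set picked := avail.reverse.take (c K) with hpicked
  have plen : picked.length = c K := by
    simp [hpicked, hcK]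
  have psub : ∀ i, i ∈ picked → i ∈ avail := fun i hi =>
    List.mem_reverse.1 (List.mem_of_mem_take hi)
  have pnd : picked.Nodup := by
    have : picked.Pairwise (· > ·) := rsorted.sublist (List.take_sublist _ _)
    exact this.imp (fun h => by omega)
  have pf : fpos ν K ∈ picked := by
    have h1 := hc.1 K hK
    have : 0 < picked.length := by omega
    obtain ⟨x, hx⟩ := List.exists_mem_of_length_pos this
    have hxa := (mem_avail x).1 (psub x hx)
    rcases hxa.1.lt_or_eq with h | h
    · apply mem_take_of_gt rsorted hx _ h
      rw [List.mem_reverse, mem_avail]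
      exact ⟨le_rfl, fun h => (key_lt _ h).false⟩
    · exact h ▸ hx
  have hst : gstep ν c (L, U) K = (L ++ picked.map (fun i => (i, K)),
    U.filter fun i => decide (i ∉ picked)) := rfl
  have mapfst : (picked.map (fun i => (i, K))).map Prod.fst = picked := by
    rw [List.map_map]
    exact (List.map_congr_left (fun _ _ => rfl)).trans (List.map_id _)
  have mapsnd : (picked.map (fun i => (i, K))).map Prod.snd = List.replicate (c K) K := by
    rw [List.map_map, ← plen]
    exact List.map_const' 
  rw [hst]
  refine ⟨?_, ?_, ?_, ?_, ?_, ?_, ?_⟩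
  · simp only [List.map_append, mapfst]
    rw [hu, List.filter_filter]
    apply List.filter_congr
    intro i _
    simp only [List.mem_append, not_or, Bool.decide_and]
    rw [Bool.and_comm]
  · simp only [List.map_append, mapfst]
    rw [List.nodup_append']
    exact ⟨nd, pnd, fun i hi hi' => ((mem_avail i).1 (psub i hi')).2 hi⟩
  · intro i k hik
    simp only [List.mem_append, List.mem_map, Prod.mk.injEq] at hik
    rcases hik with h | ⟨a, ha, rfl, rfl⟩
    · have := bd i k h
      exact ⟨by omega, this.2⟩
    · exact ⟨by omega, ((mem_avail a).1 (psub a ha)).1⟩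
  · intro k hk
    simp only [List.map_append, mapsnd, List.count_append, List.count_replicate]
    rcases (show k ≤ K by omega).lt_or_eq with h | h
    · rw [ct k h]; simp; omega
    · subst h
      have : (L.map Prod.snd).count k = 0 := by
        rw [List.count_eq_zero]
        intro hk
        obtain ⟨⟨i, k'⟩, hp, rfl⟩ := List.mem_map.1 hk
        exact (bd _ _ hp).1.false
      simp [this]
  · simp only [List.length_append, List.length_map, plen, len, Finset.sum_range_succ]
  · intro k hk
    simp only [List.mem_append, List.mem_map, Prod.mk.injEq]
    rcases (show k ≤ K by omega).lt_or_eq with h | h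
    · exact Or.inl (f k h)
    · subst h; exact Or.inr ⟨_, pf, rfl, rfl⟩
  · intro i k hik j hij hj
    simp only [List.mem_append, List.mem_map, Prod.mk.injEq] at hik ⊢
    rcases hik with h | ⟨a, ha, rfl, rfl⟩
    · obtain ⟨k', h1, h2⟩ := av i k h j hij hj
      exact ⟨k', h1, Or.inl h2⟩
    · by_cases hjL : j ∈ L.map Prod.fst
      · obtain ⟨⟨j', k'⟩, hp, rfl⟩ := List.mem_map.1 hjL
        exact ⟨k', (bd _ _ hp).1.le, Or.inl hp⟩
      · refine ⟨_, le_rfl, Or.inr ⟨j, ?_, rfl, rfl⟩⟩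
        apply mem_take_of_gt rsorted ha _ hij
        rw [List.mem_reverse, mem_avail]
        exact ⟨hj, hjL⟩

lemma greedy_inv {ν : List Bool} {c : ℕ → ℕ} (hc : Adm ν c) (K : ℕ) (hK : K ≤ northSteps ν + 1) :
    GInv ν c K ((List.range K).foldl (gstep ν c) ([], List.range (ν.length + 1))) := by
  induction K with
  | zero =>
    constructor <;> simp
  | succ K ih =>
    rw [List.range_succ (n := K), List.foldl_append]
    exact gstep_inv hc (by omega) (ih (by omega))

lemma lookup_of_mem {L : List (ℕ × ℕ)} (nd : (L.map Prod.fst).Nodup) {i k : ℕ}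
    (h : (i, k) ∈ L) : L.lookup i = some k := by
  induction L with
  | nil => simp at h
  | cons p L ih =>
    obtain ⟨a, b⟩ := p
    simp only [List.map_cons, List.nodup_cons] at nd
    rw [List.lookup_cons]
    rcases List.mem_cons.1 h with h | hm
    · simp only [Prod.mk.injEq] at h
      simp [h.1, h.2]
    · have : i ≠ a := by
        rintro rfl
        exact nd.1 (List.mem_map_of_mem (f := Prod.fst) hm)
      have hb : (i == a) = false := by simpa using this
      simp only [hb]
      exact ih nd.2 hm

lemma bracketOfPath_spec {ν μ : List Bool} (hμ : IsNuPath ν μ) :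
    IsBracketVector ν (bracketOfPath ν μ) ∧ ∀ k ≤ northSteps ν,
      cnt (fun i => (bracketOfPath ν μ).getD i 0) (ν.length + 1) k = pointsAtHeight μ k := by
  have hc := adm_of_nuPath hμ
  obtain ⟨-, nd, bd, ct, len, f, av⟩ := greedy_inv hc (northSteps ν + 1) le_rfl
  have hL : ((List.range (northSteps ν + 1)).foldl (gstep ν (pointsAtHeight μ))
    ([], List.range (ν.length + 1))).1 = bracketAssign ν μ := rfl
  rw [hL] at nd bd ct len f av
  set L := bracketAssign ν μ with hLdef
  have hB : ∀ i k, (i, k) ∈ L → (bracketOfPath ν μ).getD i 0 = k := by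
    intro i k h
    obtain ⟨h1, h2⟩ := bd i k h
    have := (fpos_spec ν (show k ≤ northSteps ν by omega)).1
    simp [bracketOfPath, List.getD_eq_getElem?_getD, show i < ν.length + 1 by omega, ← hLdef,
      lookup_of_mem nd h]
  have hperm : (L.map Prod.fst).Perm (List.range (ν.length + 1)) := by
    apply List.Subperm.perm_of_length_le
    · apply List.subperm_of_subset nd
      intro i hi
      obtain ⟨⟨i', k⟩, hp, rfl⟩ := List.mem_map.1 hi
      have h1 := bd _ _ hp
      have := (fpos_spec ν (show k ≤ northSteps ν by omega)).1
      simp; omega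
    · rw [List.length_map, len, hc.2.2, List.length_range]
  have hall : ∀ i ≤ ν.length, ∃ k, (i, k) ∈ L := by
    intro i hi
    have : i ∈ L.map Prod.fst := hperm.mem_iff.2 (by simp; omega)
    obtain ⟨⟨i', k⟩, hp, rfl⟩ := List.mem_map.1 this
    exact ⟨k, hp⟩
  constructor
  · rw [bracket_iff]
    refine ⟨by simp [bracketOfPath], ⟨fun k hk => hB _ _ (f k (by omega)), ?_, ?_, ?_⟩⟩
    · intro i hi
      obtain ⟨k, hk⟩ := hall i hi
      simp only [hB i k hk]
      have := bd i k hk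
      exact (hgt_le_iff ν hi (by omega)).2 this.2
    · intro i hi
      obtain ⟨k, hk⟩ := hall i hi
      simp only [hB i k hk]
      have := bd i k hk
      omega
    · intro i j l hij hjl hl he
      obtain ⟨k, hk⟩ := hall i (by omega)
      obtain ⟨k', hk'⟩ := hall l (by omega)
      simp only [hB _ _ hk, hB _ _ hk'] at he ⊢
      subst he
      have := (bd _ _ hk').2
      obtain ⟨k2, h1, h2⟩ := av i k hk j hij (by omega)
      rw [hB _ _ h2]; exact h1
  · intro k hk
    rw [← ct k (by omega), cnt, Finset.card_def, Finset.filter_val, Finset.range_val,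
      Multiset.range, Multiset.filter_coe, Multiset.coe_card, ← List.countP_eq_length_filter,
      ← hperm.countP_eq, List.countP_map, List.count, List.countP_map]
    apply List.countP_congr
    rintro ⟨i, k'⟩ hp
    simp only [Function.comp, hB _ _ hp]
    simp

lemma path_bij (ν : List Bool) :
    Set.BijOn (bracketOfPath ν) {μ | IsNuPath ν μ} {b | IsBracketVector ν b} := by
  refine ⟨fun μ hμ => (bracketOfPath_spec hμ).1, ?_, ?_⟩
  · intro μ hμ μ' hμ' he
    obtain ⟨a, b, -⟩ := (nuPath_iff ν μ).1 hμ
    obtain ⟨a', b', -⟩ := (nuPath_iff ν μ').1 hμ'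
    apply path_eq_of_counts (by omega) (by omega)
    intro k hk
    rw [← (bracketOfPath_spec hμ).2 k (by omega), ← (bracketOfPath_spec hμ').2 k (by omega), he]
  · intro b hb
    obtain ⟨h1, h2⟩ := (bracket_iff ν b).1 hb
    obtain ⟨μ, hμ, hk⟩ := exists_path_of_adm h2.adm
    refine ⟨μ, hμ, ?_⟩
    obtain ⟨g1, g2⟩ := bracketOfPath_spec hμ
    obtain ⟨g3, g4⟩ := (bracket_iff ν _).1 g1
    have := g4.unique h2 (fun k hk' => (g2 k hk').trans (hk k hk'))
    apply List.ext_getElem (by omega)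
    intro i h3 h4
    have := this i (by omega)
    simpa [List.getD_eq_getElem?_getD, h3, h4] using this

/-! The tree of a bracket vector -/

noncomputable def sst (B : ℕ → ℕ) (i : ℕ) : ℕ :=
  sInf {s | s ≤ i ∧ ∀ j, s ≤ j → j < i → B j < B i}

lemma sst_spec (B : ℕ → ℕ) (i : ℕ) : sst B i ≤ i ∧ (∀ j, sst B i ≤ j → j < i → B j < B i) ∧
    (sst B i = 0 ∨ B i ≤ B (sst B i - 1)) := by
  have hne : {s | s ≤ i ∧ ∀ j, s ≤ j → j < i → B j < B i}.Nonempty :=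
    ⟨i, le_rfl, fun j h1 h2 => by omega⟩
  have h : sst B i ≤ i ∧ ∀ j, sst B i ≤ j → j < i → B j < B i := Nat.sInf_mem hne
  refine ⟨h.1, h.2, ?_⟩
  by_contra hcon
  push Not at hcon
  have : sst B i ≤ sst B i - 1 := Nat.sInf_le ⟨by omega, fun j h1 h2 => by
    by_cases hj : sst B i ≤ j
    · exact h.2 j hj h2
    · have : j = sst B i - 1 := by omega
      rw [this]; exact hcon.2⟩
  omega

lemma sst_unique {B : ℕ → ℕ} {i s : ℕ} (h1 : s ≤ i) (h2 : ∀ j, s ≤ j → j < i → B j < B i)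
    (h3 : s = 0 ∨ B i ≤ B (s - 1)) : sst B i = s := by
  obtain ⟨g1, g2, g3⟩ := sst_spec B i
  rcases lt_trichotomy (sst B i) s with h | h | h
  · have := g2 (s-1) (by omega) (by omega)
    omega
  · exact h
  · have := h2 (sst B i - 1) (by omega) (by omega)
    omega

noncomputable def node (ν : List Bool) (B : ℕ → ℕ) (i : ℕ) : ℕ × ℕ := (absc ν (sst B i), B i)

def TB (ν : List Bool) (B : ℕ → ℕ) : Set (ℕ × ℕ) := node ν B '' {i | i ≤ ν.length}

lemma absc_lt {ν : List Bool} {B : ℕ → ℕ} (h : BV ν B) {i t : ℕ} (hi : i ≤ ν.length)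
    (ht : t < sst B i) : absc ν t < absc ν (sst B i) := by
  obtain ⟨g1, g2, g3⟩ := sst_spec B i
  set s := sst B i with hs
  have hB : B s ≤ B (s - 1) := by
    rcases g1.lt_or_eq with h1 | h1
    · have := g2 s le_rfl h1; omega
    · rw [← h1] at g3; omega
  have e1 := absc_add_hgt ν (show s ≤ ν.length by omega)
  have e2 := absc_add_hgt ν (show s - 1 ≤ ν.length by omega)
  have e3 : hgt ν s ≤ hgt ν (s-1) := by
    by_contra hlt
    have hn : hgt ν (s-1) ≤ northSteps ν := hgt_le_north ν
    have f1 := (hgt_le_iff ν (show s - 1 ≤ ν.length by omega) hn).1 le_rfl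
    have f2 := (hgt_le_iff ν (show s ≤ ν.length by omega) hn).not.1 hlt
    have f3 : fpos ν (hgt ν (s-1)) = s - 1 := by omega
    have f4 := h.fp _ hn
    rw [f3] at f4
    have := h.lo s (by omega)
    omega
  have := absc_mono ν (show t ≤ s - 1 by omega)
  omega

lemma sst_eq_of_absc {ν : List Bool} {B : ℕ → ℕ} (h : BV ν B) {i j : ℕ} (hi : i ≤ ν.length)
    (hj : j ≤ ν.length) (he : absc ν (sst B i) = absc ν (sst B j)) : sst B i = sst B j := by
  rcases lt_trichotomy (sst B i) (sst B j) with g | g | g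
  · have := absc_lt h hj g; omega
  · exact g
  · have := absc_lt h hi g; omega

lemma eq_of_sst {B : ℕ → ℕ} {i j : ℕ} (h1 : sst B i = sst B j) (h2 : B i = B j) : i = j := by
  obtain ⟨a1, a2, -⟩ := sst_spec B i
  obtain ⟨b1, b2, -⟩ := sst_spec B j
  rcases lt_trichotomy i j with g | g | g
  · have := b2 i (by omega) g; omega
  · exact g
  · have := a2 j (by omega) g; omega

lemma node_inj {ν : List Bool} {B : ℕ → ℕ} (h : BV ν B) : Set.InjOn (node ν B) {i | i ≤ ν.length} := by
  intro i hi j hj he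
  simp only [node, Prod.mk.injEq] at he
  exact eq_of_sst (sst_eq_of_absc h hi hj he.1) he.2

lemma TB_ncard {ν : List Bool} {B : ℕ → ℕ} (h : BV ν B) : (TB ν B).ncard = ν.length + 1 := by
  rw [TB, (node_inj h).ncard_image]
  have : {i | i ≤ ν.length} = ((Finset.range (ν.length + 1) : Finset ℕ) : Set ℕ) := by
    ext i; simp
  rw [this, Set.ncard_coe_finset, Finset.card_range]

lemma TB_rowCount {ν : List Bool} {B : ℕ → ℕ} (h : BV ν B) (k : ℕ) :
    rowCount (TB ν B) k = cnt B (ν.length + 1) k := by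
  have : {x | (x, k) ∈ TB ν B} = (fun i => absc ν (sst B i)) ''
      ((Finset.range (ν.length + 1)).filter (fun i => B i = k) : Finset ℕ) := by
    ext x
    simp only [TB, node, Set.mem_ofPred_eq, Set.mem_image, Prod.mk.injEq, Finset.coe_filter,
      Finset.mem_range]
    constructor
    · rintro ⟨i, h1, h2, h3⟩; exact ⟨i, ⟨by omega, h3⟩, h2⟩
    · rintro ⟨i, ⟨h1, h3⟩, h2⟩; exact ⟨i, by omega, h2, h3⟩
  rw [rowCount, this, Set.InjOn.ncard_image, Set.ncard_coe_finset, cnt]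
  intro i hi j hj he
  simp only [Finset.coe_filter, Finset.mem_range, Set.mem_ofPred_eq] at hi hj
  exact eq_of_sst (sst_eq_of_absc h (by omega) (by omega) he) (by omega)

lemma TB_sub {ν : List Bool} {B : ℕ → ℕ} (h : BV ν B) : TB ν B ⊆ APts ν := by
  rintro _ ⟨i, hi, rfl⟩
  have hi' : i ≤ ν.length := hi
  rw [node, mem_APts_iff]
  have hn := h.hi i hi
  refine ⟨hn, ?_⟩
  obtain ⟨f1, f2⟩ := fpos_spec ν hn
  have := absc_add_hgt ν f1
  have := h.le_fpos hi
  have := absc_mono ν ((sst_spec B i).1.trans this)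
  omega

lemma TB_aux {ν : List Bool} {B : ℕ → ℕ} (h : BV ν B) {i j : ℕ} (hi : i ≤ ν.length)
    (hj : j ≤ ν.length) (h1 : absc ν (sst B i) < absc ν (sst B j)) (h2 : B i < B j)
    (h3 : (absc ν (sst B j), B i) ∈ APts ν) : False := by
  rw [mem_APts_iff] at h3
  obtain ⟨hn, h3⟩ := h3
  obtain ⟨f1, f2⟩ := fpos_spec ν hn
  have e := absc_add_hgt ν f1
  have hs : sst B j ≤ fpos ν (B i) := by
    by_contra hlt
    have := absc_lt h hj (t := fpos ν (B i)) (by omega)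
    omega
  have hss : sst B i < sst B j := by
    by_contra hlt
    have := absc_mono ν (show sst B j ≤ sst B i by omega)
    omega
  obtain ⟨a1, a2, a3⟩ := sst_spec B i
  obtain ⟨b1, b2, b3⟩ := sst_spec B j
  have hb : B j ≤ B (sst B j - 1) := by omega
  have hlt : i < sst B j - 1 := by
    by_contra hge
    rcases (show sst B j - 1 ≤ i by omega).lt_or_eq with g | g
    · have := a2 (sst B j - 1) (by omega) g; omega
    · rw [g] at hb; omega
  have := h.av i (sst B j - 1) (fpos ν (B i)) hlt (by omega) f1 (h.fp _ hn).symm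
  omega

lemma TB_compat {ν : List Bool} {B : ℕ → ℕ} (h : BV ν B) : (TB ν B).Pairwise (Compatible ν) := by
  rintro _ ⟨i, hi, rfl⟩ _ ⟨j, hj, rfl⟩ -
  rintro (⟨h1, h2, h3⟩ | ⟨h1, h2, h3⟩)
  · exact TB_aux h hi hj h1 h2 h3
  · exact TB_aux h hj hi h1 h2 h3

lemma exists_first_max (B : ℕ → ℕ) (s i : ℕ) (h : s < i) : ∃ l, s ≤ l ∧ l < i ∧
    (∀ j, s ≤ j → j < i → B j ≤ B l) ∧ ∀ j, s ≤ j → j < l → B j < B l := by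
  induction i with
  | zero => omega
  | succ i ih =>
    rcases (show s ≤ i by omega).lt_or_eq with h1 | h1
    · obtain ⟨l, a, b, c, d⟩ := ih h1
      by_cases hl : B l < B i
      · refine ⟨i, by omega, by omega, fun j hj hj' => ?_, fun j hj hj' => ?_⟩
        · rcases (show j ≤ i by omega).lt_or_eq with g | g
          · have := c j hj g; omega
          · rw [g]
        · have := c j hj hj'; omega
      · refine ⟨l, a, by omega, fun j hj hj' => ?_, d⟩
        rcases (show j ≤ i by omega).lt_or_eq with g | g
        · exact c j hj g
        · rw [g]; omega
    · subst h1
      refine ⟨s, le_rfl, by omega, fun j hj hj' => ?_, fun j hj hj' => by omega⟩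
      have : j = s := by omega
      rw [this]

lemma mem_col {ν : List Bool} {B : ℕ → ℕ} (h : BV ν B) {i v : ℕ} (hi : i ≤ ν.length) :
    (absc ν (sst B i), v) ∈ TB ν B ↔ ∃ j ≤ ν.length, sst B j = sst B i ∧ B j = v := by
  constructor
  · rintro ⟨j, hj, he⟩
    simp only [node, Prod.mk.injEq] at he
    exact ⟨j, hj, sst_eq_of_absc h hj hi he.1, he.2⟩
  · rintro ⟨j, hj, h1, h2⟩
    exact ⟨j, hj, by simp [node, h1, h2]⟩

lemma leftChild_none {ν : List Bool} {B : ℕ → ℕ} (h : BV ν B) {i : ℕ} (hi : i ≤ ν.length)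
    (hs : sst B i = i) : leftChild (TB ν B) (node ν B i) = none := by
  rw [leftChild, if_neg]
  rintro ⟨b, h1, h2⟩
  obtain ⟨j, hj, h3, rfl⟩ := (mem_col h hi).1 h1
  simp only [node] at h2
  obtain ⟨b1, b2, b3⟩ := sst_spec B j
  rcases (show i ≤ j by omega).lt_or_eq with g | g
  · have := b2 i (by omega) g; omega
  · rw [g] at h2; omega

lemma leftChild_some {ν : List Bool} {B : ℕ → ℕ} (h : BV ν B) {i : ℕ} (hi : i ≤ ν.length)
    (hs : sst B i < i) : ∃ l, sst B l = sst B i ∧ l < i ∧ B l < B i ∧ sst B i ≤ l ∧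
      (∀ j, l < j → j < i → B j ≤ B l) ∧
      leftChild (TB ν B) (node ν B i) = some (node ν B l) := by
  obtain ⟨l, h1, h2, h3, h4⟩ := exists_first_max B _ _ hs
  obtain ⟨a1, a2, a3⟩ := sst_spec B i
  have hli := a2 l h1 h2
  have hsl : sst B l = sst B i := sst_unique h1 h4 (by omega)
  refine ⟨l, hsl, h2, hli, h1, fun j hj hj' => h3 j (by omega) hj', ?_⟩
  have hmem : (absc ν (sst B i), B l) ∈ TB ν B := (mem_col h hi).2 ⟨l, by omega, hsl, rfl⟩
  rw [leftChild, if_pos ⟨B l, hmem, hli⟩]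
  have : IsGreatest {b | ((node ν B i).1, b) ∈ TB ν B ∧ b < (node ν B i).2} (B l) := by
    refine ⟨⟨hmem, hli⟩, ?_⟩
    rintro b ⟨hb1, hb2⟩
    obtain ⟨j, hj, h5, rfl⟩ := (mem_col h hi).1 hb1
    simp only [node] at hb2
    obtain ⟨b1, b2, b3⟩ := sst_spec B j
    apply h3 j (by omega)
    by_contra hge
    rcases (show i ≤ j by omega).lt_or_eq with g | g
    · have := b2 i (by omega) g; omega
    · rw [g] at hb2; omega
  rw [this.csSup_eq]
  simp [node, hsl]

lemma lt_of_same_row {ν : List Bool} {B : ℕ → ℕ} {i j : ℕ}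
    (he : B j = B i) (hlt : absc ν (sst B i) < absc ν (sst B j)) : i < j ∧ i < sst B j := by
  obtain ⟨a1, a2, a3⟩ := sst_spec B i
  obtain ⟨b1, b2, b3⟩ := sst_spec B j
  have h0 : sst B i < sst B j := by
    by_contra hge
    have := absc_mono ν (show sst B j ≤ sst B i by omega)
    omega
  have hij : i < j := by
    by_contra hge
    rcases (show j ≤ i by omega).lt_or_eq with g | g
    · have := a2 j (by omega) g; omega
    · rw [g] at h0; omega
  refine ⟨hij, ?_⟩
  by_contra hge
  have := b2 i (by omega) hij
  omega

lemma rightChild_none {ν : List Bool} {B : ℕ → ℕ} (h : BV ν B) {i : ℕ}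
    (hs : fpos ν (B i) ≤ i) : rightChild (TB ν B) (node ν B i) = none := by
  rw [rightChild, if_neg]
  rintro ⟨a, ⟨j, hj, h1⟩, h2⟩
  simp only [node, Prod.mk.injEq] at h1 h2
  obtain ⟨rfl, h1⟩ := h1
  have h3 := (lt_of_same_row h1 h2).1
  have := h.le_fpos hj
  rw [h1] at this
  omega

lemma rightChild_some {ν : List Bool} {B : ℕ → ℕ} (h : BV ν B) {i : ℕ} (hi : i ≤ ν.length)
    (hs : i < fpos ν (B i)) : ∃ r, i < r ∧ r ≤ ν.length ∧ B r = B i ∧ sst B r = i + 1 ∧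
      (∀ j, i < j → j < r → B j < B i) ∧
      rightChild (TB ν B) (node ν B i) = some (node ν B r) := by
  have hn := h.hi i hi
  obtain ⟨f1, f2⟩ := fpos_spec ν hn
  have hex : ∃ r, i < r ∧ B r = B i := ⟨fpos ν (B i), hs, h.fp _ hn⟩
  set r := Nat.find hex with hr
  obtain ⟨r1, r2⟩ := Nat.find_spec hex
  rw [← hr] at r1 r2
  have rle : r ≤ fpos ν (B i) := Nat.find_min' hex ⟨hs, h.fp _ hn⟩
  have rmin : ∀ j, i < j → B j = B i → r ≤ j := fun j h1 h2 => Nat.find_min' hex ⟨h1, h2⟩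
  have hbt : ∀ j, i < j → j < r → B j < B i := by
    intro j h1 h2
    have := h.av i j r h1 h2 (by omega) r2.symm
    have : B j ≠ B i := fun he => by have := rmin j h1 he; omega
    omega
  have hsr : sst B r = i + 1 := sst_unique (by omega)
    (fun j h1 h2 => by rw [r2]; exact hbt j (by omega) h2) (Or.inr (by simp [r2]))
  have hlt : absc ν (sst B i) < absc ν (sst B r) := by
    apply absc_lt h (by omega)
    have := (sst_spec B i).1
    omega
  have hmem : (absc ν (sst B r), B i) ∈ TB ν B := ⟨r, show r ≤ ν.length by omega, by simp [node, r2]⟩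
  refine ⟨r, r1, by omega, r2, hsr, hbt, ?_⟩
  have hleast : IsLeast {a | (a, (node ν B i).2) ∈ TB ν B ∧ (node ν B i).1 < a}
      (absc ν (sst B r)) := by
    refine ⟨⟨hmem, hlt⟩, ?_⟩
    rintro a ⟨⟨j, hj, h1⟩, h2⟩
    simp only [node, Prod.mk.injEq] at h1 h2
    obtain ⟨rfl, h1⟩ := h1
    have := (lt_of_same_row h1 h2).2
    exact absc_mono ν (by omega)
  rw [rightChild, if_pos ⟨_, hmem, hlt⟩, hleast.csInf_eq, if_neg]
  · simp [node, r2]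
  · rintro ⟨b, hb1, hb2⟩
    obtain ⟨j, hj, h5, rfl⟩ := (mem_col h (show r ≤ ν.length by omega)).1 hb1
    simp only [node] at hb2
    obtain ⟨b1, b2, b3⟩ := sst_spec B j
    rw [h5, hsr] at b3
    simp at b3
    omega

lemma inorder_TB {ν : List Bool} {B : ℕ → ℕ} (h : BV ν B) (fuel : ℕ) : ∀ i e, i ≤ e →
    e ≤ ν.length → (∀ j, i < j → j ≤ e → B j ≤ B i) → (e = ν.length ∨ B i < B (e+1)) →
    e + 1 - sst B i ≤ fuel →
    inorderAux (TB ν B) fuel (node ν B i) =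
      (List.range' (sst B i) (e + 1 - sst B i)).map (node ν B) := by
  induction fuel with
  | zero =>
    intro i e h1 h2 h3 h4 h5
    have := (sst_spec B i).1
    omega
  | succ fuel ih =>
    intro i e h1 h2 h3 h4 h5
    obtain ⟨a1, a2, a3⟩ := sst_spec B i
    have hleft : (match leftChild (TB ν B) (node ν B i) with
        | none => []
        | some l => inorderAux (TB ν B) fuel l) =
        (List.range' (sst B i) (i - sst B i)).map (node ν B) := by
      rcases a1.lt_or_eq with g | g
      · obtain ⟨l, l1, l2, l3, l4, l5, l6⟩ := leftChild_some h (show i ≤ ν.length by omega) g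
        rw [l6]
        have := ih l (i-1) (by omega) (by omega) (fun j hj hj' => l5 j hj (by omega))
          (Or.inr (by rwa [show i - 1 + 1 = i by omega])) (by omega)
        simp only [this, l1, show i - 1 + 1 = i by omega]
      · rw [leftChild_none h (by omega) g, g]
        simp
    have hright : (match rightChild (TB ν B) (node ν B i) with
        | none => []
        | some r => inorderAux (TB ν B) fuel r) =
        (List.range' (i+1) (e - i)).map (node ν B) := by
      by_cases g : i < fpos ν (B i)
      · obtain ⟨r, r1, r2, r3, r4, r5, r6⟩ := rightChild_some h (show i ≤ ν.length by omega) g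
        rw [r6]
        have hre : r ≤ e := by
          by_contra hlt
          rcases (show e + 1 ≤ r by omega).lt_or_eq with g' | g'
          · have := r5 (e+1) (by omega) g'; omega
          · rw [g'] at h4; omega
        have := ih r e hre h2 (fun j hj hj' => by rw [r3]; exact h3 j (by omega) hj')
          (by rw [r3]; exact h4) (by omega)
        simp only [this, r4, show e + 1 - (i + 1) = e - i by omega]
      · rw [rightChild_none h (by omega)]
        have : e = i := by
          by_contra hne
          have b1 := h3 (i+1) (by omega) (by omega)
          have b2 := h.lo (i+1) (by omega)
          have b3 := (hgt_le_iff ν (show i + 1 ≤ ν.length by omega)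
            (h.hi i (by omega))).1 (by omega)
          omega
        simp [this]
    rw [inorderAux]
    refine (congrArg₂ (fun a b => a ++ node ν B i :: b) hleft hright).trans ?_
    have e1 : e + 1 - sst B i = (i - sst B i) + (1 + (e - i)) := by omega
    rw [e1, ← List.range'_append, List.map_append]
    congr 1
    rw [show 1 + (e - i) = (e - i) + 1 by omega, List.range'_succ, List.map_cons]
    congr 2 <;> simp <;> omega

lemma bracketOfTree_TB {ν : List Bool} {B : ℕ → ℕ} (h : BV ν B) :
    bracketOfTree ν (TB ν B) = (List.range (ν.length + 1)).map B := by
  have hB : B ν.length = northSteps ν := by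
    have := h.fp _ le_rfl
    rwa [fpos_north] at this
  have hex : ∃ i, B i = northSteps ν := ⟨_, hB⟩
  set i := Nat.find hex with hi
  have i1 : B i = northSteps ν := Nat.find_spec hex
  have i2 : i ≤ ν.length := Nat.find_min' hex hB
  have hs : sst B i = 0 := sst_unique (by omega) (fun j _ hj => by
    have a := h.hi j (by omega)
    have b : B j ≠ northSteps ν := Nat.find_min hex hj
    omega) (Or.inl rfl)
  have hnode : node ν B i = (0, northSteps ν) := by
    simp [node, hs, absc, i1]
  have := inorder_TB h (ν.length + 1) i ν.length i2 le_rfl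
    (fun j _ hj => by rw [i1]; exact h.hi j hj) (Or.inl rfl) (by omega)
  rw [hnode, hs] at this
  rw [bracketOfTree, TB_ncard h, this, List.map_map, List.range_eq_range']
  rfl

/-! General compatible sets and ν-trees -/

lemma Compatible.symm' {ν : List Bool} {p q : ℕ × ℕ} (h : Compatible ν p q) : Compatible ν q p :=
  fun hi => h (Or.symm hi)

lemma compat_no {ν : List Bool} {S : Set (ℕ × ℕ)} (hS : S.Pairwise (Compatible ν)) {u v x y : ℕ}
    (h1 : (u, v) ∈ S) (h2 : (x, y) ∈ S) (hx : u < x) (hy : v < y) (hA : (x, v) ∈ APts ν) :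
    False :=
  hS h1 h2 (by simp; omega) (Or.inl ⟨hx, hy, hA⟩)

lemma tree_mem {ν : List Bool} {T : Set (ℕ × ℕ)} (hT : IsNuTree ν T) {x y : ℕ}
    (hA : (x, y) ∈ APts ν)
    (h1 : ∀ u v, (u, v) ∈ T → x < u → y < v → (u, y) ∈ APts ν → False)
    (h2 : ∀ u v, (u, v) ∈ T → u < x → v < y → (x, v) ∈ APts ν → False) : (x, y) ∈ T := by
  have hc : ∀ q ∈ T, Compatible ν (x, y) q := by
    rintro ⟨u, v⟩ hq (⟨a, b, c⟩ | ⟨a, b, c⟩)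
    · exact h1 u v hq a b c
    · exact h2 u v hq a b c
  have := hT.2.2 (insert (x, y) T) (Set.insert_subset hA hT.1)
    ((Set.pairwise_insert).2 ⟨hT.2.1, fun q hq _ => ⟨hc q hq, (hc q hq).symm'⟩⟩)
    (Set.subset_insert _ _)
  rw [← this]
  exact Set.mem_insert _ _

def Forb (S : Set (ℕ × ℕ)) (k x : ℕ) : Prop := ∃ j < k, ∃ u < x, (x, j) ∈ S ∧ (u, j) ∈ S

lemma not_forb {ν : List Bool} {S : Set (ℕ × ℕ)} (hA : S ⊆ APts ν)
    (hS : S.Pairwise (Compatible ν)) {x k : ℕ} (h : (x, k) ∈ S) : ¬ Forb S k x := by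
  rintro ⟨j, hj, u, hu, h1, h2⟩
  exact compat_no hS h2 h hu hj (hA h1)

lemma tree_avail {ν : List Bool} {T : Set (ℕ × ℕ)} (hT : IsNuTree ν T) {k a : ℕ}
    (hf : ¬ Forb T k a) : ∀ v u, (u, v) ∈ T → u < a → v < k → (a, v) ∈ APts ν → False := by
  intro v
  induction v using Nat.strong_induction_on with
  | _ v ih =>
  intro u hu hua hvk hA
  apply hf
  refine ⟨v, hvk, u, hua, ?_, hu⟩
  apply tree_mem hT hA
  · intro u' v' h1 h2 h3 h4
    exact compat_no hT.2.1 hu h1 (by omega) h3 h4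
  · intro u' v' h1 h2 h3 h4
    exact ih v' h3 u' h1 h2 (by omega) h4

lemma tree_row_upper {ν : List Bool} {T : Set (ℕ × ℕ)} (hT : IsNuTree ν T) {x a k : ℕ}
    (hx : (x, k) ∈ T) (hxa : x < a) (hA : (a, k) ∈ APts ν) (hf : ¬ Forb T k a) : (a, k) ∈ T := by
  apply tree_mem hT hA
  · intro u v h1 h2 h3 h4
    exact compat_no hT.2.1 hx h1 (by omega) h3 h4
  · intro u v h1 h2 h3 h4
    exact tree_avail hT hf v u h1 h2 h3 h4

lemma zero_mem_APts {ν : List Bool} {k : ℕ} (hk : k ≤ northSteps ν) : (0, k) ∈ APts ν :=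
  ⟨Nat.zero_le _, by cases ν <;> simp [heightAt], hk⟩

lemma tree_row_nonempty {ν : List Bool} {T : Set (ℕ × ℕ)} (hT : IsNuTree ν T) {k : ℕ}
    (hk : k ≤ northSteps ν) : ∃ x, (x, k) ∈ T := by
  set P := {a | (a, k) ∈ APts ν ∧ ¬ Forb T k a} with hP
  have hne : P.Nonempty := ⟨0, zero_mem_APts hk, by
    rintro ⟨j, hj, u, hu, -⟩; omega⟩
  have hbd : BddAbove P := ⟨eastSteps ν, fun a ha => ha.1.1⟩
  obtain ⟨h1, h2⟩ := Nat.sSup_mem hne hbd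
  refine ⟨sSup P, tree_mem hT h1 ?_ ?_⟩
  · intro u v h3 h4 h5 h6
    have : Forb T k u := by
      by_contra hf
      have : u ≤ sSup P := le_csSup hbd ⟨h6, hf⟩
      omega
    obtain ⟨j, hj, w, hw, g1, g2⟩ := this
    exact compat_no hT.2.1 g2 h3 hw (by omega) (hT.1 g1)
  · intro u v h3 h4 h5 h6
    exact tree_avail hT h2 v u h3 h4 h5 h6

lemma tree_root {ν : List Bool} {T : Set (ℕ × ℕ)} (hT : IsNuTree ν T) :
    (0, northSteps ν) ∈ T := by
  apply tree_mem hT (zero_mem_APts le_rfl)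
  · intro u v h1 h2 h3 h4
    have : v ≤ northSteps ν := (hT.1 h1).2.2
    omega
  · intro u v h1 h2; omega

lemma tree_col {ν : List Bool} {T : Set (ℕ × ℕ)} (hT : IsNuTree ν T) {x : ℕ} (h1 : 1 ≤ x)
    (h2 : x ≤ eastSteps ν) : Forb T (northSteps ν + 1) x := by
  by_contra hf
  apply tree_avail hT hf _ _ (tree_root hT) (by omega) (by omega)
  rw [mem_APts_iff, fpos_north, ← east_add_north]
  omega

noncomputable def rowF (ν : List Bool) (S : Set (ℕ × ℕ)) (j : ℕ) : Finset ℕ :=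
  (Finset.range (eastSteps ν + 1)).filter (fun x => (x, j) ∈ S)

noncomputable def rowN (ν : List Bool) (S : Set (ℕ × ℕ)) (j : ℕ) : Finset ℕ :=
  (Finset.range (eastSteps ν + 1)).filter (fun x => (x, j) ∈ S ∧ ∃ u < x, (u, j) ∈ S)

lemma mem_rowF {ν : List Bool} {S : Set (ℕ × ℕ)} (hA : S ⊆ APts ν) {j x : ℕ} :
    x ∈ rowF ν S j ↔ (x, j) ∈ S := by
  simp only [rowF, Finset.mem_filter, Finset.mem_range, and_iff_right_iff_imp]
  intro h
  have : x ≤ eastSteps ν := (hA h).1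
  omega

lemma mem_rowN {ν : List Bool} {S : Set (ℕ × ℕ)} (hA : S ⊆ APts ν) {j x : ℕ} :
    x ∈ rowN ν S j ↔ (x, j) ∈ S ∧ ∃ u < x, (u, j) ∈ S := by
  simp only [rowN, Finset.mem_filter, Finset.mem_range, and_iff_right_iff_imp]
  rintro ⟨h, -⟩
  have : x ≤ eastSteps ν := (hA h).1
  omega

lemma rowCount_eq {ν : List Bool} {S : Set (ℕ × ℕ)} (hA : S ⊆ APts ν) (j : ℕ) :
    rowCount S j = (rowF ν S j).card := by
  rw [rowCount, ← Set.ncard_coe_finset]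
  congr 1
  ext x
  rw [Finset.mem_coe, mem_rowF hA]; rfl

lemma rowCount_N {ν : List Bool} {S : Set (ℕ × ℕ)} (hA : S ⊆ APts ν) (j : ℕ)
    (hne : ∃ x, (x, j) ∈ S) : rowCount S j = (rowN ν S j).card + 1 := by
  rw [rowCount_eq hA]
  have hm : (sInf {x | (x, j) ∈ S}, j) ∈ S := Nat.sInf_mem (s := {x | (x, j) ∈ S}) hne
  have hle : ∀ x, (x, j) ∈ S → sInf {x | (x, j) ∈ S} ≤ x := fun x hx => Nat.sInf_le hx
  set a := sInf {x | (x, j) ∈ S}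
  have : rowF ν S j = insert a (rowN ν S j) := by
    ext x
    rw [Finset.mem_insert, mem_rowF hA, mem_rowN hA]
    constructor
    · intro hx
      rcases (hle x hx).lt_or_eq with h | h
      · exact Or.inr ⟨hx, a, h, hm⟩
      · exact Or.inl h.symm
    · rintro (rfl | h)
      · exact hm
      · exact h.1
  rw [this, Finset.card_insert_of_notMem]
  rw [mem_rowN hA]
  rintro ⟨-, u, hu, h⟩
  have := hle u h
  omega

lemma rowCount_N_le {ν : List Bool} {S : Set (ℕ × ℕ)} (hA : S ⊆ APts ν) (j : ℕ) :
    rowCount S j ≤ (rowN ν S j).card + 1 := by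
  by_cases hne : ∃ x, (x, j) ∈ S
  · rw [rowCount_N hA j hne]
  · have : rowF ν S j = ∅ := by
      ext x
      rw [mem_rowF hA]
      simp
      exact fun h => hne ⟨x, h⟩
    rw [rowCount_eq hA, this]; simp

lemma sum_rowN {ν : List Bool} {S : Set (ℕ × ℕ)} (hA : S ⊆ APts ν)
    (hS : S.Pairwise (Compatible ν)) (k : ℕ) : ∑ j ∈ Finset.range k, (rowN ν S j).card =
      ((Finset.range k).biUnion (rowN ν S)).card := by
  rw [Finset.card_biUnion]
  intro i _ j _ hij
  rw [Function.onFun, Finset.disjoint_left]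
  intro x hx hx'
  rw [mem_rowN hA] at hx hx'
  rcases lt_or_gt_of_ne hij with h | h
  · exact not_forb hA hS hx'.1 ⟨i, h, hx.2.choose, hx.2.choose_spec.1, hx.1, hx.2.choose_spec.2⟩
  · exact not_forb hA hS hx.1 ⟨j, h, hx'.2.choose, hx'.2.choose_spec.1, hx'.1, hx'.2.choose_spec.2⟩

lemma sum_rowCount_le {ν : List Bool} {S : Set (ℕ × ℕ)} (hA : S ⊆ APts ν)
    (hS : S.Pairwise (Compatible ν)) {k : ℕ} (hk : k ≤ northSteps ν) :
    ∑ j ∈ Finset.range (k+1), rowCount S j ≤ fpos ν k + 1 := by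
  have h1 : ∑ j ∈ Finset.range (k+1), rowCount S j ≤
      ∑ j ∈ Finset.range (k+1), ((rowN ν S j).card + 1) :=
    Finset.sum_le_sum fun j _ => rowCount_N_le hA j
  rw [Finset.sum_add_distrib, sum_rowN hA hS] at h1
  have h2 : (Finset.range (k+1)).biUnion (rowN ν S) ⊆ Finset.Icc 1 (fpos ν k - k) := by
    intro x hx
    obtain ⟨j, hj, hx⟩ := Finset.mem_biUnion.1 hx
    obtain ⟨hx, u, hu, -⟩ := (mem_rowN hA).1 hx
    have h3 := APts_up (hA hx) (show j ≤ k by simp at hj; omega) hk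
    rw [mem_APts_iff] at h3
    rw [Finset.mem_Icc]; omega
  have h3 := Finset.card_le_card h2
  have h4 := zero_mem_APts hk
  rw [mem_APts_iff] at h4
  simp at h1 h3
  omega

lemma tree_adm {ν : List Bool} {T : Set (ℕ × ℕ)} (hT : IsNuTree ν T) : Adm ν (rowCount T) := by
  refine ⟨fun k hk => ?_, fun k hk => sum_rowCount_le hT.1 hT.2.1 hk, ?_⟩
  · rw [rowCount_N hT.1 k (tree_row_nonempty hT hk)]; omega
  · have h1 : ∑ j ∈ Finset.range (northSteps ν+1), rowCount T j =
      ∑ j ∈ Finset.range (northSteps ν+1), ((rowN ν T j).card + 1) :=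
      Finset.sum_congr rfl fun j hj =>
        rowCount_N hT.1 j (tree_row_nonempty hT (by simp at hj; omega))
    rw [h1, Finset.sum_add_distrib, sum_rowN hT.1 hT.2.1]
    have h2 : (Finset.range (northSteps ν+1)).biUnion (rowN ν T) = Finset.Icc 1 (eastSteps ν) := by
      ext x
      rw [Finset.mem_biUnion, Finset.mem_Icc]
      constructor
      · rintro ⟨j, hj, hx⟩
        obtain ⟨hx, u, hu, -⟩ := (mem_rowN hT.1).1 hx
        have : x ≤ eastSteps ν := (hT.1 hx).1
        omega
      · rintro ⟨a, b⟩
        obtain ⟨j, hj, u, hu, g1, g2⟩ := tree_col hT a b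
        exact ⟨j, by simpa using hj, (mem_rowN hT.1).2 ⟨g1, u, hu, g2⟩⟩
    rw [h2, ← east_add_north]
    simp; omega

lemma tree_unique_s10 {ν : List Bool} {T T' : Set (ℕ × ℕ)} (hT : IsNuTree ν T) (hT' : IsNuTree ν T')
    (hc : ∀ k ≤ northSteps ν, rowCount T k = rowCount T' k) : T = T' := by
  have key : ∀ k, k ≤ northSteps ν → ∀ x, (x, k) ∈ T ↔ (x, k) ∈ T' := by
    intro k
    induction k using Nat.strong_induction_on with
    | _ k ih =>
    intro hk
    set U : Set (ℕ × ℕ) → Finset ℕ := fun S => (Finset.range (eastSteps ν + 1)).filter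
      (fun x => (x, k) ∈ APts ν ∧ ¬ Forb S k x) with hU
    have sub : ∀ S, IsNuTree ν S → rowF ν S k ⊆ U S := by
      intro S hS x hx
      rw [mem_rowF hS.1] at hx
      have : x ≤ eastSteps ν := (hS.1 hx).1
      simp only [hU, Finset.mem_filter, Finset.mem_range]
      exact ⟨by omega, hS.1 hx, not_forb hS.1 hS.2.1 hx⟩
    have up : ∀ S, IsNuTree ν S → ∀ x ∈ rowF ν S k, ∀ y ∈ U S, x < y → y ∈ rowF ν S k := by
      intro S hS x hx y hy hxy
      rw [mem_rowF hS.1] at hx ⊢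
      simp only [hU, Finset.mem_filter, Finset.mem_range] at hy
      exact tree_row_upper hS hx hxy hy.2.1 hy.2.2
    have hUU : U T' = U T := by
      simp only [hU]
      apply Finset.filter_congr
      intro x _
      have : Forb T' k x ↔ Forb T k x := by
        constructor
        · rintro ⟨j, hj, u, hu, g1, g2⟩
          exact ⟨j, hj, u, hu, (ih j hj (by omega) x).2 g1, (ih j hj (by omega) u).2 g2⟩
        · rintro ⟨j, hj, u, hu, g1, g2⟩
          exact ⟨j, hj, u, hu, (ih j hj (by omega) x).1 g1, (ih j hj (by omega) u).1 g2⟩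
      rw [this]
    have hcc : (rowF ν T k).card = (rowF ν T' k).card := by
      rw [← rowCount_eq hT.1, ← rowCount_eq hT'.1, hc k hk]
    have e := upper_eq (sub T hT) (hUU ▸ sub T' hT') (up T hT) (hUU ▸ up T' hT') hcc
    intro x
    rw [← mem_rowF hT.1, ← mem_rowF hT'.1, e]
  ext ⟨x, y⟩
  constructor
  · intro h; exact (key y (hT.1 h).2.2 x).1 h
  · intro h; exact (key y (hT'.1 h).2.2 x).2 h

lemma TB_tree {ν : List Bool} {B : ℕ → ℕ} (h : BV ν B) : IsNuTree ν (TB ν B) := by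
  refine ⟨TB_sub h, TB_compat h, fun S hA hS hsub => ?_⟩
  have hrow : ∀ j, rowF ν (TB ν B) j ⊆ rowF ν S j := by
    intro j x hx
    rw [mem_rowF (TB_sub h)] at hx
    rw [mem_rowF hA]
    exact hsub hx
  have hle : ∀ j ∈ Finset.range (northSteps ν + 1), rowCount (TB ν B) j ≤ rowCount S j := by
    intro j _
    rw [rowCount_eq hA, rowCount_eq (TB_sub h)]
    exact Finset.card_le_card (hrow j)
  have hsum1 : ∑ j ∈ Finset.range (northSteps ν + 1), rowCount (TB ν B) j = ν.length + 1 := by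
    rw [Finset.sum_congr rfl fun j _ => TB_rowCount h j]
    exact h.adm.2.2
  have hsum2 := sum_rowCount_le hA hS le_rfl
  rw [fpos_north] at hsum2
  have heq := (Finset.sum_eq_sum_iff_of_le hle).1
    (le_antisymm (Finset.sum_le_sum hle) (by omega))
  apply Set.Subset.antisymm _ hsub
  rintro ⟨x, y⟩ hx
  have hy : y ≤ northSteps ν := (hA hx).2.2
  have h1 := heq y (by simp; omega)
  rw [rowCount_eq hA, rowCount_eq (TB_sub h)] at h1
  have h2 := Finset.eq_of_subset_of_card_le (hrow y) h1.ge
  rw [← mem_rowF (TB_sub h), h2, mem_rowF hA]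
  exact hx

lemma tree_eq_TB {ν : List Bool} {T : Set (ℕ × ℕ)} (hT : IsNuTree ν T) :
    ∃ b, IsBracketVector ν b ∧ T = TB ν (fun i => b.getD i 0) := by
  obtain ⟨μ, hμ, hk⟩ := exists_path_of_adm (tree_adm hT)
  obtain ⟨g1, g2⟩ := bracketOfPath_spec hμ
  have g3 := ((bracket_iff ν _).1 g1).2
  refine ⟨_, g1, tree_unique_s10 hT (TB_tree g3) fun k hk' => ?_⟩
  rw [TB_rowCount g3, g2 k hk', hk k hk']

lemma bracketOfTree_TB' {ν : List Bool} {b : List ℕ} (hb : IsBracketVector ν b) :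
    bracketOfTree ν (TB ν (fun i => b.getD i 0)) = b := by
  obtain ⟨h1, h2⟩ := (bracket_iff ν b).1 hb
  rw [bracketOfTree_TB h2]
  apply List.ext_getElem (by simp [h1])
  intro i h3 h4
  simp [List.getD_eq_getElem?_getD, h4]

lemma tree_bij (ν : List Bool) :
    Set.BijOn (bracketOfTree ν) {T | IsNuTree ν T} {b | IsBracketVector ν b} := by
  refine ⟨?_, ?_, ?_⟩
  · intro T hT
    obtain ⟨b, hb, rfl⟩ := tree_eq_TB hT
    rw [bracketOfTree_TB' hb]; exact hb
  · intro T hT T' hT' he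
    obtain ⟨b, hb, rfl⟩ := tree_eq_TB hT
    obtain ⟨b', hb', rfl⟩ := tree_eq_TB hT'
    rw [bracketOfTree_TB' hb, bracketOfTree_TB' hb'] at he
    rw [he]
  · intro b hb
    exact ⟨_, TB_tree ((bracket_iff ν b).1 hb).2, bracketOfTree_TB' hb⟩

theorem bracket_vector_bijections (ν : List Bool) :
    Set.BijOn (bracketOfTree ν) {T | IsNuTree ν T} {b | IsBracketVector ν b} ∧
    Set.BijOn (bracketOfPath ν) {μ | IsNuPath ν μ} {b | IsBracketVector ν b} := by

  exact ⟨tree_bij ν, path_bij ν⟩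
end

section
/- Let ν be a lattice path. For every ν-path μ, the bracket vector of the ν-tree obtained by right flushing equals the bracket vector of μ: b(R(μ)) = b(μ). -/
open scoped Classical

/-- Number of east steps before the `(k+1)`-st north step. -/
def xmax : List Bool → ℕ → ℕ
  | [], _ => 0
  | false :: r, k => xmax r k + 1
  | true :: _, 0 => 0
  | true :: r, k + 1 => xmax r k

theorem heightAt_le_iff_s11 (ν : List Bool) : ∀ (x k : ℕ), x ≤ eastSteps ν →
    (heightAt ν x ≤ k ↔ x ≤ xmax ν k) := by
  induction ν with
  | nil => intro x k hx; simp [eastSteps] at hx; subst hx; simp [heightAt]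
  | cons b r ih =>
    intro x k hx
    cases x with
    | zero => simp [heightAt]
    | succ x =>
      cases b with
      | true =>
        have hx' : x + 1 ≤ eastSteps r := by simpa [eastSteps] using hx
        cases k with
        | zero => simp [heightAt, xmax]
        | succ k => simp only [heightAt, xmax, ← ih _ k hx']; omega
      | false =>
        have hx' : x ≤ eastSteps r := by simpa [eastSteps] using hx
        simp only [heightAt, xmax, ih _ k hx']; omega

theorem xmax_le (ν : List Bool) : ∀ k, xmax ν k ≤ eastSteps ν := by
  induction ν with
  | nil => intro k; simp [xmax]
  | cons b r ih =>
    intro k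
    cases b with
    | true =>
      cases k with
      | zero => simp [xmax]
      | succ k => have := ih k; simpa [xmax, eastSteps] using this
    | false => have := ih k; simpa [xmax, eastSteps] using this

theorem xmax_north (ν : List Bool) : xmax ν (northSteps ν) = eastSteps ν := by
  induction ν with
  | nil => simp [xmax, eastSteps]
  | cons b r ih =>
    cases b <;> simpa [xmax, eastSteps, northSteps] using ih

theorem xmax_mono (ν : List Bool) : ∀ k, xmax ν k ≤ xmax ν (k + 1) := by
  induction ν with
  | nil => intro k; simp [xmax]
  | cons b r ih =>
    intro k
    cases b with
    | true =>
      cases k with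
      | zero => simp [xmax]
      | succ k => have := ih k; simpa [xmax] using this
    | false => have := ih k; simpa [xmax] using this

theorem length_eq_steps (ν : List Bool) : ν.length = eastSteps ν + northSteps ν := by
  induction ν with
  | nil => simp [eastSteps, northSteps]
  | cons b r ih =>
    simp only [eastSteps, northSteps] at ih ⊢
    rw [List.length_cons, ih]
    cases b <;> simp <;> omega

theorem take_xmax (ν : List Bool) : ∀ k, k ≤ northSteps ν →
    (ν.take (xmax ν k + k)).count true = k ∧ (ν.take (xmax ν k + k)).count false = xmax ν k := by
  induction ν with
  | nil => intro k hk; simp [northSteps] at hk; subst hk; simp [xmax]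
  | cons b r ih =>
    intro k hk
    cases b with
    | true =>
      cases k with
      | zero => simp [xmax]
      | succ k =>
        have := ih k (by simpa [northSteps] using hk)
        simpa [xmax, ← add_assoc] using this
    | false =>
      have := ih k (by simpa [northSteps] using hk)
      have e : xmax r k + 1 + k = xmax r k + k + 1 := by omega
      simpa [xmax, e] using this

theorem le_xmax (ν : List Bool) : ∀ k i, i ≤ ν.length → (ν.take i).count true = k →
    i ≤ xmax ν k + k := by
  induction ν with
  | nil => intro k i hi _; simp at hi; omega
  | cons b r ih =>
    intro k i hi h
    cases i with
    | zero => omega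
    | succ i =>
      have hi' : i ≤ r.length := by simpa using hi
      cases b with
      | true =>
        cases k with
        | zero => simp at h
        | succ k =>
          have := ih k i hi' (by simpa using h)
          simp only [xmax]; omega
      | false =>
        have := ih k i hi' (by simpa using h)
        simp only [xmax]; omega

theorem fpos_eq (ν : List Bool) (k : ℕ) (hk : k ≤ northSteps ν) : fpos ν k = xmax ν k + k := by
  apply IsGreatest.csSup_eq
  refine ⟨⟨?_, (take_xmax ν k hk).1⟩, fun i hi => le_xmax ν k i hi.1 hi.2⟩
  have := xmax_le ν k
  have := length_eq_steps ν
  omega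

theorem pah_false (r : List Bool) (k : ℕ) :
    pointsAtHeight (false :: r) k = pointsAtHeight r k + if k = 0 then 1 else 0 := by
  unfold pointsAtHeight
  rw [List.length_cons, List.range_succ_eq_map (n := r.length + 1), List.filter_cons]
  by_cases hk : k = 0
  · subst hk
    simp [List.filter_map, Function.comp_def]
  · have : ¬ (0 = k) := fun h => hk h.symm
    simp [List.filter_map, Function.comp_def, hk, this]

theorem pah_true_zero (r : List Bool) : pointsAtHeight (true :: r) 0 = 1 := by
  unfold pointsAtHeight
  rw [List.length_cons, List.range_succ_eq_map (n := r.length + 1), List.filter_cons]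
  simp [List.filter_map, Function.comp_def]

theorem pah_true_succ (r : List Bool) (k : ℕ) :
    pointsAtHeight (true :: r) (k + 1) = pointsAtHeight r k := by
  unfold pointsAtHeight
  rw [List.length_cons, List.range_succ_eq_map (n := r.length + 1), List.filter_cons]
  simp [List.filter_map, Function.comp_def]

theorem pah_zero (μ : List Bool) : pointsAtHeight μ 0 = xmax μ 0 + 1 := by
  induction μ with
  | nil => simp [pointsAtHeight, xmax]
  | cons b r ih =>
    cases b with
    | true => simp [pah_true_zero, xmax]
    | false => simp [pah_false, xmax, ih]

theorem pah_succ (μ : List Bool) : ∀ k, k < northSteps μ →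
    pointsAtHeight μ (k + 1) + xmax μ k = xmax μ (k + 1) + 1 := by
  induction μ with
  | nil => intro k hk; simp [northSteps] at hk
  | cons b r ih =>
    intro k hk
    cases b with
    | true =>
      rw [pah_true_succ]
      cases k with
      | zero => simp [xmax, pah_zero]
      | succ k =>
        have := ih k (by simpa [northSteps] using hk)
        simpa [xmax] using this
    | false =>
      have := ih k (by simpa [northSteps] using hk)
      rw [pah_false]
      simp only [xmax]
      simp
      omega

structure Hyp (X Y c : ℕ → ℕ) (n : ℕ) : Prop where
  mono : ∀ k, X k ≤ X (k + 1)
  ymono : ∀ k, Y k ≤ Y (k + 1)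
  c0 : c 0 = Y 0 + 1
  cs : ∀ k, k < n → c (k + 1) + Y k = Y (k + 1) + 1
  le : ∀ k, k ≤ n → Y k ≤ X k
  fin : Y n = X n

theorem hyp_of_path (ν μ : List Bool) (h : IsNuPath ν μ) :
    Hyp (xmax ν) (xmax μ) (pointsAtHeight μ) (northSteps ν) := by
  obtain ⟨he, hn, hp⟩ := h
  refine ⟨xmax_mono ν, xmax_mono μ, pah_zero μ, fun k hk => pah_succ μ k (hn ▸ hk), ?_, ?_⟩
  · intro k hk
    have h1 := take_xmax μ k (hn ▸ hk)
    have h3 := xmax_le μ k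
    have h2 := hp (xmax μ k + k) (by
      have := length_eq_steps μ
      omega)
    simp only [pointAt, APts, h1, Set.mem_ofPred_eq] at h2
    exact (heightAt_le_iff_s11 ν _ _ h2.1).1 h2.2.1
  · rw [xmax_north, ← hn, xmax_north, he]

theorem rowAvail_eq (ν : List Bool) (y : ℕ) :
    rowAvail ν y = (List.range (xmax ν y + 1)).reverse := by
  unfold rowAvail
  congr 1
  have hle := xmax_le ν y
  obtain ⟨d, hd⟩ := Nat.exists_eq_add_of_le hle
  have e : eastSteps ν + 1 = (xmax ν y + 1) + d := by omega
  rw [e, List.range_add, List.filter_append]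
  rw [List.filter_eq_self.2, List.filter_eq_nil_iff.2, List.append_nil]
  · intro a ha
    simp only [List.mem_map, List.mem_range] at ha
    obtain ⟨b, hb, rfl⟩ := ha
    simp only [decide_eq_true_eq]
    rw [heightAt_le_iff_s11 ν _ _ (by omega)]
    omega
  · intro a ha
    simp only [List.mem_range] at ha
    simp only [decide_eq_true_eq]
    rw [heightAt_le_iff_s11 ν _ _ (by omega)]
    omega

def mrg (k : ℕ) : List (List ℕ) → List ℕ
  | [] => []
  | w :: ws => mrg k ws ++ (w ++ [k])

theorem mrg_snoc (k : ℕ) (ws : List (List ℕ)) (w : List ℕ) :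
    mrg k (ws ++ [w]) = w ++ k :: mrg k ws := by
  induction ws with
  | nil => simp [mrg]
  | cons a t ih => simp [mrg, ih]

def stk (X c : ℕ → ℕ) : ℕ → List (List ℕ)
  | 0 => List.replicate (X 0 + 1) []
  | k + 1 => List.replicate (X (k + 1) - X k) [] ++
      (mrg k ((stk X c k).take (c k)) :: (stk X c k).drop (c k))

def clm (X c : ℕ → ℕ) : ℕ → List ℕ
  | 0 => (List.range (X 0 + 1)).reverse
  | k + 1 => (List.range' (X k + 1) (X (k + 1) - X k)).reverse ++ (clm X c k).drop (c k - 1)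

section
variable {X Y c : ℕ → ℕ} {n : ℕ}

theorem Hyp.cpos (h : Hyp X Y c n) (k : ℕ) (hk : k ≤ n) : 1 ≤ c k := by
  cases k with
  | zero => rw [h.c0]; omega
  | succ k => have := h.cs k (by omega); have := h.ymono k; omega

theorem Hyp.len (h : Hyp X Y c n) (k : ℕ) (hk : k ≤ n) :
    (stk X c k).length + Y k = X k + c k := by
  induction k with
  | zero => simp [stk, h.c0]; omega
  | succ k ih =>
    have := ih (by omega)
    have := h.cs k (by omega)
    have := h.mono k
    have := h.le k (by omega)
    simp only [stk, List.length_append, List.length_replicate, List.length_cons,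
      List.length_drop]
    omega

theorem Hyp.clen (h : Hyp X Y c n) (k : ℕ) (hk : k ≤ n) :
    (clm X c k).length = (stk X c k).length := by
  induction k with
  | zero => simp [stk, clm]
  | succ k ih =>
    have := ih (by omega)
    have := h.len k (by omega)
    have := h.cpos k (by omega)
    have := h.le k (by omega)
    simp only [stk, clm, List.length_append, List.length_replicate, List.length_cons,
      List.length_drop, List.length_reverse, List.length_range']
    omega

theorem Hyp.c_le (h : Hyp X Y c n) (k : ℕ) (hk : k ≤ n) : c k ≤ (stk X c k).length := by
  have := h.len k hk
  have := h.le k hk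
  omega

end

def fullS : List (List ℕ) → List (Option ℕ)
  | [] => []
  | w :: ws => fullS ws ++ (w.map some ++ [none])

theorem fullS_append (a b : List (List ℕ)) : fullS (a ++ b) = fullS b ++ fullS a := by
  induction a with
  | nil => simp [fullS]
  | cons w t ih => simp [fullS, ih]

theorem fullS_replicate (d : ℕ) : fullS (List.replicate d []) = List.replicate d none := by
  induction d with
  | zero => simp [fullS]
  | succ d ih => rw [List.replicate_succ, fullS, ih, List.replicate_succ']; simp

theorem fullS_count (ws : List (List ℕ)) : (fullS ws).countP (fun o => decide (o = none)) = ws.length := by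
  induction ws with
  | nil => simp [fullS]
  | cons w t ih =>
    simp only [fullS, List.countP_append, ih, List.length_cons]
    simp [List.countP_map, Function.comp_def]

theorem fullS_fill (k : ℕ) (ws : List (List ℕ)) :
    (fullS ws).map (fun o => some (o.getD k)) = (mrg k ws).map some := by
  induction ws with
  | nil => simp [fullS, mrg]
  | cons w t ih => simp [fullS, mrg, ih, Function.comp_def]

theorem pick_mem (g : ℕ → Option ℕ) (A B : List (Option ℕ)) (c N : ℕ)
    (hN : N = A.length + B.length)
    (h : (List.range N).map g = A ++ B)
    (hc : B.countP (fun o => decide (o = none)) = c) (i : ℕ) :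
    i ∈ (((List.range N).filter (fun i => decide (g i = none))).reverse).take c ↔
      A.length ≤ i ∧ i < N ∧ g i = none := by
  subst hN
  rw [List.range_add] at h ⊢
  rw [List.map_append] at h
  have h2 := (List.append_inj h (by simp)).2
  rw [List.filter_append, List.reverse_append, List.take_append]
  have hl : (List.filter (fun i => decide (g i = none))
      (List.map (fun x => A.length + x) (List.range B.length))).reverse.length = c := by
    rw [List.length_reverse, ← List.countP_eq_length_filter, ← hc]
    conv_rhs => rw [← h2]
    rw [List.countP_map (f := g)]
    rfl
  rw [List.take_of_length_le (le_of_eq hl), hl]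
  simp only [Nat.sub_self, List.take_zero, List.append_nil, List.mem_reverse, List.mem_filter,
    List.mem_map, List.mem_range, decide_eq_true_eq]
  constructor
  · rintro ⟨⟨a, ha, rfl⟩, h⟩
    exact ⟨by omega, by omega, h⟩
  · rintro ⟨h1, h2, h3⟩
    exact ⟨⟨i - A.length, by omega, by omega⟩, h3⟩

def bstep (f c : ℕ → ℕ) (st : List (ℕ × ℕ) × List ℕ) (k : ℕ) : List (ℕ × ℕ) × List ℕ :=
  let picked := ((st.2.filter fun i => decide (i ≤ f k)).reverse).take (c k)
  (st.1 ++ picked.map fun i => (i, k), st.2.filter fun i => decide (i ∉ picked))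

theorem lookup_const (l : List ℕ) (k i : ℕ) :
    (l.map fun i => (i, k)).lookup i = if i ∈ l then some k else none := by
  induction l with
  | nil => simp
  | cons a t ih =>
    rw [List.map_cons, List.lookup_cons, ih]
    by_cases h : i = a
    · simp [h]
    · have : (i == a) = false := by simpa using h
      simp [this, h]

section
variable {X Y c : ℕ → ℕ} {n : ℕ}

structure BInv (X c : ℕ → ℕ) (N k : ℕ) (st : List (ℕ × ℕ) × List ℕ) : Prop where
  rem : st.2 = (List.range N).filter (fun i => decide (st.1.lookup i = none))
  map : (List.range (X k + k + 1)).map (fun i => st.1.lookup i) = fullS (stk X c k)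
  big : ∀ i, X k + k + 1 ≤ i → st.1.lookup i = none

theorem Hyp.bhalf (h : Hyp X Y c n) (f : ℕ → ℕ) (N k : ℕ) (hk : k ≤ n) (hf : f k = X k + k)
    (hN : X k + k + 1 ≤ N) (st : List (ℕ × ℕ) × List ℕ) (I : BInv X c N k st) :
    (bstep f c st k).2 = (List.range N).filter
      (fun i => decide ((bstep f c st k).1.lookup i = none)) ∧
    (List.range (X k + k + 1)).map (fun i => (bstep f c st k).1.lookup i) =
      fullS ((stk X c k).drop (c k)) ++ (mrg k ((stk X c k).take (c k))).map some ∧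
    ∀ i, X k + k + 1 ≤ i → (bstep f c st k).1.lookup i = none := by
  obtain ⟨a, l⟩ := st
  obtain ⟨hrem, hmap, hbig⟩ := I
  simp only at hrem hmap hbig
  have e1 : l.filter (fun i => decide (i ≤ f k)) =
      (List.range (X k + k + 1)).filter (fun i => decide (a.lookup i = none)) := by
    obtain ⟨d, rfl⟩ := Nat.exists_eq_add_of_le hN
    rw [hrem, List.filter_filter, List.range_add, List.filter_append]
    rw [(List.filter_eq_nil_iff (l := List.map _ _)).2, List.append_nil]
    · apply List.filter_congr
      intro x hx
      rw [List.mem_range] at hx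
      have : x ≤ f k := by omega
      simp [this]
    · intro x hx
      simp only [List.mem_map, List.mem_range] at hx
      obtain ⟨b, hb, rfl⟩ := hx
      have : ¬ (X k + k + 1 + b ≤ f k) := by omega
      simp [this]
  have hsplit : fullS (stk X c k) =
      fullS ((stk X c k).drop (c k)) ++ fullS ((stk X c k).take (c k)) := by
    rw [← fullS_append, List.take_append_drop]
  rw [hsplit] at hmap
  have hlen : X k + k + 1 = (fullS ((stk X c k).drop (c k))).length +
      (fullS ((stk X c k).take (c k))).length := by
    have := congrArg List.length hmap
    simpa using this
  have hp := pick_mem (fun i => a.lookup i) _ _ (c k) _ hlen hmap (by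
    rw [fullS_count, List.length_take, min_eq_left (h.c_le k hk)])
  have hlook : ∀ i, (bstep f c (a, l) k).1.lookup i =
      if (fullS ((stk X c k).drop (c k))).length ≤ i ∧ i < X k + k + 1 then
        some ((a.lookup i).getD k) else a.lookup i := by
    intro i
    simp only [bstep, e1]
    rw [List.lookup_append, lookup_const]
    simp only [hp]
    cases hi : a.lookup i with
    | none => simp
    | some v => simp
  refine ⟨?_, ?_, ?_⟩
  · simp only [hlook]
    simp only [bstep, e1, hp]
    rw [hrem, List.filter_filter]
    apply List.filter_congr
    intro x _
    by_cases h1 : (fullS ((stk X c k).drop (c k))).length ≤ x ∧ x < X k + k + 1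
    · simp [h1]
    · have : ¬ ((fullS ((stk X c k).drop (c k))).length ≤ x ∧ x < X k + k + 1 ∧
          a.lookup x = none) := fun h => h1 ⟨h.1, h.2.1⟩
      rw [if_neg h1]
      simp only [this, not_false_eq_true, decide_true, Bool.true_and]
  · simp only [hlook]
    rw [hlen, List.range_add, List.map_append] at hmap ⊢
    obtain ⟨m1, m2⟩ := List.append_inj hmap (by simp)
    congr 1
    · rw [← m1]
      simp only [List.length_map, List.length_range]
      apply List.map_congr_left
      intro x hx
      rw [List.mem_range] at hx
      rw [if_neg (by omega)]
    · rw [← fullS_fill, ← m2]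
      simp only [List.length_map, List.length_range, List.map_map]
      apply List.map_congr_left
      intro x hx
      rw [List.mem_range] at hx
      simp only [Function.comp_apply]
      rw [if_pos]
      omega
  · intro i hi
    rw [hlook, if_neg (by omega)]
    exact hbig i hi

theorem Hyp.binv (h : Hyp X Y c n) (f : ℕ → ℕ) (N k : ℕ) (hk : k ≤ n)
    (hf : ∀ k ≤ n, f k = X k + k) (hN : ∀ k ≤ n, X k + k + 1 ≤ N) :
    BInv X c N k ((List.range k).foldl (bstep f c) ([], List.range N)) := by
  induction k with
  | zero =>
    refine ⟨?_, ?_, ?_⟩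
    · simp
    · simp [stk, fullS_replicate]
    · simp
  | succ k ih =>
    obtain ⟨h1, h2, h3⟩ := h.bhalf f N k (by omega) (hf k (by omega)) (hN k (by omega)) _
      (ih (by omega))
    rw [List.range_succ, List.foldl_append]
    simp only [List.foldl_cons, List.foldl_nil]
    refine ⟨h1, ?_, ?_⟩
    · have hm := h.mono k
      obtain ⟨d, hd⟩ := Nat.exists_eq_add_of_le hm
      have e : X (k + 1) + (k + 1) + 1 = (X k + k + 1) + (d + 1) := by omega
      rw [e, List.range_add, List.map_append, h2, stk, fullS_append, fullS, fullS_replicate]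
      have e2 : X (k + 1) - X k = d := by omega
      rw [e2]
      have : List.map (fun i => List.lookup i (bstep f c
          (List.foldl (bstep f c) ([], List.range N) (List.range k)) k).1)
          (List.map (fun x => X k + k + 1 + x) (List.range (d + 1))) =
          List.replicate (d + 1) none := by
        rw [List.eq_replicate_iff]
        refine ⟨by simp, ?_⟩
        intro b hb
        simp only [List.mem_map, List.mem_range] at hb
        obtain ⟨_, ⟨x, hx, rfl⟩, rfl⟩ := hb
        exact h3 _ (by omega)
      rw [this, List.replicate_succ]
      simp
    · intro i hi
      have := h.mono k
      exact h3 i (by omega)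

theorem Hyp.stk_len_fin (h : Hyp X Y c n) : (stk X c n).length = c n := by
  have := h.len n le_rfl
  have := h.fin
  omega

theorem Hyp.bfin (h : Hyp X Y c n) (f : ℕ → ℕ) (N : ℕ) 
    (hf : ∀ k ≤ n, f k = X k + k) (hN : ∀ k ≤ n, X k + k + 1 ≤ N) (hNn : N = X n + n + 1) :
    (List.range N).map (fun i =>
      ((((List.range (n + 1)).foldl (bstep f c) ([], List.range N)).1).lookup i).getD 0) =
      mrg n (stk X c n) := by
  obtain ⟨h1, h2, h3⟩ := h.bhalf f N n le_rfl (hf n le_rfl) (hN n le_rfl) _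
      (h.binv f N n le_rfl hf hN)
  rw [List.drop_of_length_le (le_of_eq h.stk_len_fin),
    List.take_of_length_le (le_of_eq h.stk_len_fin), ← hNn] at h2
  rw [List.range_succ, List.foldl_append]
  simp only [List.foldl_cons, List.foldl_nil]
  have := congrArg (List.map (fun o : Option ℕ => o.getD 0)) h2
  simpa [fullS, Function.comp_def] using this

end

theorem bracketOfPath_eq (ν μ : List Bool) (h : IsNuPath ν μ) :
    bracketOfPath ν μ = mrg (northSteps ν) (stk (xmax ν) (pointsAtHeight μ) (northSteps ν)) := by
  have H := hyp_of_path ν μ h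
  have hl := length_eq_steps ν
  have := H.bfin (fpos ν) (ν.length + 1) (fun k hk => fpos_eq ν k hk)
    (fun k hk => by have := xmax_le ν k; omega) (by rw [xmax_north]; omega)
  rw [← this]
  rfl

def Pc (X c : ℕ → ℕ) (k : ℕ) : List ℕ := (clm X c k).take (c k)

def Fb (X c : ℕ → ℕ) (k : ℕ) : List ℕ := (List.range k).flatMap (fun j => (Pc X c j).dropLast)

theorem filter_not_mem_take (l : List ℕ) (hl : l.Nodup) (j : ℕ) :
    l.filter (fun x => decide (x ∉ l.take j)) = l.drop j := by
  conv_lhs => rw [← List.take_append_drop j l]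
  have hd : List.Disjoint (l.take j) (l.drop j) := List.disjoint_take_drop hl le_rfl
  rw [List.take_append_drop j l]
  conv_lhs => arg 2; rw [← List.take_append_drop j l]
  rw [List.filter_append, List.filter_eq_nil_iff.2, List.nil_append, List.filter_eq_self.2]
  · intro a ha
    simpa using fun h => hd h ha
  · intro a ha
    simpa using ha

theorem Fb_mono (X c : ℕ → ℕ) (k k' : ℕ) (h : k ≤ k') (x : ℕ) (hx : x ∈ Fb X c k) :
    x ∈ Fb X c k' := by
  simp only [Fb, List.mem_flatMap, List.mem_range] at hx ⊢
  obtain ⟨a, ha, hx⟩ := hx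
  exact ⟨a, by omega, hx⟩

section
variable {X Y c : ℕ → ℕ} {n : ℕ}

theorem Hyp.xmono (h : Hyp X Y c n) {a b : ℕ} (hab : a ≤ b) : X a ≤ X b :=
  monotone_nat_of_le_succ h.mono hab

theorem Hyp.clm_le (h : Hyp X Y c n) (k : ℕ) : ∀ x ∈ clm X c k, x ≤ X k := by
  induction k with
  | zero => intro x hx; simp [clm] at hx; omega
  | succ k ih =>
    intro x hx
    simp only [clm, List.mem_append, List.mem_reverse, List.mem_range'_1] at hx
    have := h.mono k
    rcases hx with hx | hx
    · omega
    · have := ih x (List.mem_of_mem_drop hx); omega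

theorem Hyp.clm_sorted (h : Hyp X Y c n) (k : ℕ) : (clm X c k).Pairwise (· > ·) := by
  induction k with
  | zero =>
    rw [clm, List.pairwise_reverse]
    exact List.pairwise_lt_range
  | succ k ih =>
    rw [clm, List.pairwise_append]
    refine ⟨?_, ih.sublist (List.drop_sublist _ _), ?_⟩
    · rw [List.pairwise_reverse]
      exact List.pairwise_lt_range'
    · intro a ha b hb
      simp only [List.mem_reverse, List.mem_range'_1] at ha
      have := h.clm_le k b (List.mem_of_mem_drop hb)
      omega

theorem Hyp.clm_nodup (h : Hyp X Y c n) (k : ℕ) : (clm X c k).Nodup :=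
  (h.clm_sorted k).imp (fun h => ne_of_gt h)

theorem Hyp.pc_len (h : Hyp X Y c n) (k : ℕ) (hk : k ≤ n) : (Pc X c k).length = c k := by
  rw [Pc, List.length_take, h.clen k hk, min_eq_left (h.c_le k hk)]

theorem Hyp.pc_le (h : Hyp X Y c n) (k : ℕ) (x : ℕ) (hx : x ∈ Pc X c k) : x ≤ X k :=
  h.clm_le k x (List.mem_of_mem_take hx)

theorem Hyp.pc_dropLast (h : Hyp X Y c n) (k : ℕ) (hk : k ≤ n) :
    (Pc X c k).dropLast = (clm X c k).take (c k - 1) := by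
  rw [List.dropLast_eq_take, h.pc_len k hk, Pc, List.take_take]
  congr 1
  omega

theorem Fb_succ (k : ℕ) : Fb X c (k + 1) = Fb X c k ++ (Pc X c k).dropLast := by
  simp [Fb, List.range_succ]

theorem Hyp.clm_filter (h : Hyp X Y c n) (k : ℕ) (hk : k ≤ n) :
    (List.range (X k + 1)).reverse.filter (fun x => decide (x ∉ Fb X c k)) = clm X c k := by
  induction k with
  | zero => simp [Fb, clm]
  | succ k ih =>
    have ih := ih (by omega)
    have hm := h.mono k
    obtain ⟨d, hd⟩ := Nat.exists_eq_add_of_le hm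
    have e : X (k + 1) + 1 = (X k + 1) + d := by omega
    have e2 : X (k + 1) - X k = d := by omega
    rw [e, List.range_add, List.reverse_append, List.filter_append, clm, e2]
    congr 1
    · rw [List.range'_eq_map_range, List.filter_eq_self.2]
      intro a ha
      simp only [List.mem_reverse, List.mem_map, List.mem_range] at ha
      obtain ⟨b, hb, rfl⟩ := ha
      simp only [decide_eq_true_eq, Fb, List.mem_flatMap, List.mem_range, not_exists, not_and]
      intro j hj hx
      have := h.pc_le j _ (List.mem_of_mem_dropLast hx)
      have := h.xmono (show j ≤ k by omega)
      omega
    · rw [← filter_not_mem_take _ (h.clm_nodup k)]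
      conv_rhs => arg 2; rw [← ih]
      rw [List.filter_filter]
      apply List.filter_congr
      intro x _
      rw [Fb_succ, h.pc_dropLast k (by omega)]
      simp only [List.mem_append, not_or, Bool.decide_and, Bool.and_comm]

theorem Hyp.clm_last (h : Hyp X Y c n) (k : ℕ) (hk : k ≤ n) : (clm X c k).getLast? = some 0 := by
  induction k with
  | zero => simp [clm, List.range_succ_eq_map]
  | succ k ih =>
    have ih := ih (by omega)
    rw [clm, List.getLast?_append, List.getLast?_drop, if_neg, ih]
    · simp
    · have := h.clen k (by omega)
      have := h.c_le k (by omega)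
      have := h.cpos k (by omega)
      omega

theorem Hyp.not_later (h : Hyp X Y c n) (k b : ℕ) (hb : b ≤ n) (hkb : k < b) (x : ℕ)
    (hx : x ∈ (clm X c k).take (c k - 1)) : x ∉ Pc X c b := by
  intro hxb
  have h1 := List.mem_of_mem_take hxb
  rw [← h.clm_filter b hb] at h1
  simp only [List.mem_filter, decide_eq_true_eq] at h1
  apply h1.2
  apply Fb_mono X c (k + 1) b (by omega)
  rw [Fb_succ, h.pc_dropLast k (by omega)]
  exact List.mem_append_right _ hx

end

def Good (T : Set (ℕ × ℕ)) (p : ℕ × ℕ) (w : List ℕ) : Prop :=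
  ∀ fuel, w.length ≤ fuel → (inorderAux T fuel p).map Prod.snd = w

def GoodO (T : Set (ℕ × ℕ)) (o : Option (ℕ × ℕ)) (w : List ℕ) : Prop :=
  (o = none ∧ w = []) ∨ ∃ p, o = some p ∧ Good T p w

theorem Good.node (T : Set (ℕ × ℕ)) (p : ℕ × ℕ) (wl wr : List ℕ)
    (hl : GoodO T (leftChild T p) wl) (hr : GoodO T (rightChild T p) wr) :
    Good T p (wl ++ p.2 :: wr) := by
  intro fuel hf
  cases fuel with
  | zero => simp at hf
  | succ fuel =>
    simp only [List.length_append, List.length_cons] at hf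
    rw [inorderAux, List.map_append, List.map_cons]
    congr 1
    · rcases hl with ⟨h1, h2⟩ | ⟨q, h1, h2⟩
      · simp [h1, h2]
      · simp only [h1]; exact h2 _ (by omega)
    · congr 1
      rcases hr with ⟨h1, h2⟩ | ⟨q, h1, h2⟩
      · simp [h1, h2]
      · simp only [h1]; exact h2 _ (by omega)

def ColW (X c : ℕ → ℕ) (T : Set (ℕ × ℕ)) (k x : ℕ) (w : List ℕ) : Prop :=
  (w = [] ∧ ∀ b < k, x ∉ Pc X c b) ∨
  ∃ b < k, x ∈ Pc X c b ∧ (∀ b', b < b' → b' < k → x ∉ Pc X c b') ∧ Good T (x, b) w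

section
variable {X Y c : ℕ → ℕ} {n : ℕ}

theorem left_good (T : Set (ℕ × ℕ)) (hT : ∀ x y, (x, y) ∈ T ↔ y ≤ n ∧ x ∈ Pc X c y)
    (k x : ℕ) (hk : k ≤ n) (w : List ℕ) (hw : ColW X c T k x w) :
    GoodO T (leftChild T (x, k)) w := by
  rcases hw with ⟨h1, h2⟩ | ⟨b, hb, hxb, hmax, hg⟩
  · left
    refine ⟨?_, h1⟩
    unfold leftChild
    rw [if_neg]
    rintro ⟨b, hb, hbk⟩
    exact h2 b hbk ((hT _ _).1 hb).2
  · right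
    refine ⟨(x, b), ?_, hg⟩
    unfold leftChild
    have hm : (x, b) ∈ T := (hT _ _).2 ⟨by omega, hxb⟩
    rw [if_pos ⟨b, hm, hb⟩]
    congr 2
    apply IsGreatest.csSup_eq
    refine ⟨⟨hm, hb⟩, ?_⟩
    rintro b' ⟨h1, h2⟩
    by_contra hlt
    exact hmax b' (by omega) h2 ((hT _ _).1 h1).2

theorem Hyp.row_good (h : Hyp X Y c n) (T : Set (ℕ × ℕ))
    (hT : ∀ x y, (x, y) ∈ T ↔ y ≤ n ∧ x ∈ Pc X c y) (k : ℕ) (hk : k ≤ n)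
    (hF : List.Forall₂ (ColW X c T k) (clm X c k) (stk X c k))
    (i : ℕ) (hi : i < c k) (hic : i < (clm X c k).length) :
    Good T ((clm X c k)[i], k) (mrg k ((stk X c k).take (i + 1))) := by
  have hlen := h.clen k hk
  have hs := h.clm_sorted k
  rw [List.pairwise_iff_getElem] at hs
  have memP : ∀ x, x ∈ Pc X c k ↔ ∃ j, ∃ hj : j < (clm X c k).length, j < c k ∧ (clm X c k)[j] = x := by
    intro x
    rw [Pc, List.mem_take_iff_getElem]
    constructor
    · rintro ⟨j, hj, rfl⟩; exact ⟨j, by omega, by omega, rfl⟩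
    · rintro ⟨j, hj, hj2, rfl⟩; exact ⟨j, by omega, rfl⟩
  induction i with
  | zero =>
    have his : 0 < (stk X c k).length := by omega
    have hcw : ColW X c T k (clm X c k)[0] (stk X c k)[0] := by
      have := (List.forall₂_iff_get.1 hF).2 0 hic his
      simpa using this
    have hl := left_good T hT k _ hk _ hcw
    have hr : GoodO T (rightChild T ((clm X c k)[0], k)) [] := by
      left
      refine ⟨?_, rfl⟩
      unfold rightChild
      rw [if_neg]
      rintro ⟨a, ha, hlt⟩
      obtain ⟨j, hj, hjc, rfl⟩ := (memP a).1 ((hT _ _).1 ha).2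
      simp only at hlt
      rcases Nat.eq_zero_or_pos j with rfl | hpos
      · omega
      · have := hs 0 j hic hj hpos
        omega
    have := Good.node T _ _ _ hl hr
    rw [List.take_add_one, List.take_zero, List.getElem?_eq_getElem his]
    simpa [mrg] using this
  | succ i ih =>
    have his : i + 1 < (stk X c k).length := by omega
    have hii : i < (clm X c k).length := by omega
    have hcw : ColW X c T k (clm X c k)[i + 1] (stk X c k)[i + 1] := by
      have := (List.forall₂_iff_get.1 hF).2 (i + 1) hic his
      simpa using this
    have hl := left_good T hT k _ hk _ hcw
    have hmem : ((clm X c k)[i], k) ∈ T :=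
      (hT _ _).2 ⟨hk, (memP _).2 ⟨i, hii, by omega, rfl⟩⟩
    have hlt : (clm X c k)[i + 1] < (clm X c k)[i] := hs i (i + 1) hii hic (by omega)
    have hinf : sInf {a | (a, k) ∈ T ∧ (clm X c k)[i + 1] < a} = (clm X c k)[i] := by
      apply IsLeast.csInf_eq
      refine ⟨⟨hmem, hlt⟩, ?_⟩
      rintro a ⟨ha, hla⟩
      obtain ⟨j, hj, hjc, rfl⟩ := (memP a).1 ((hT _ _).1 ha).2
      rcases lt_trichotomy j i with h1 | h1 | h1
      · exact le_of_lt (hs j i hj hii h1)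
      · subst h1; exact le_rfl
      · exfalso
        rcases Nat.lt_or_ge (i + 1) j with h2 | h2
        · have := hs (i + 1) j hic hj h2; omega
        · have : j = i + 1 := by omega
          subst this
          omega
    have hr : GoodO T (rightChild T ((clm X c k)[i + 1], k)) (mrg k ((stk X c k).take (i + 1))) := by
      right
      refine ⟨((clm X c k)[i], k), ?_, ih (by omega) hii⟩
      unfold rightChild
      rw [if_pos ⟨_, hmem, hlt⟩]
      simp only [hinf]
      rw [if_neg]
      rintro ⟨b, hb, hkb⟩
      have hb' := (hT _ _).1 hb
      refine h.not_later k b hb'.1 hkb _ ?_ hb'.2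
      rw [List.mem_take_iff_getElem]
      exact ⟨i, by omega, rfl⟩
    have := Good.node T _ _ _ hl hr
    rw [List.take_add_one (i := i + 1), List.getElem?_eq_getElem his]
    simp only [Option.toList_some]
    rw [mrg_snoc]
    exact this

theorem Hyp.cols_good (h : Hyp X Y c n) (T : Set (ℕ × ℕ))
    (hT : ∀ x y, (x, y) ∈ T ↔ y ≤ n ∧ x ∈ Pc X c y) (k : ℕ) (hk : k ≤ n) :
    List.Forall₂ (ColW X c T k) (clm X c k) (stk X c k) := by
  induction k with
  | zero =>
    rw [List.forall₂_iff_get]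
    refine ⟨h.clen 0 hk, ?_⟩
    intro i h1 h2
    left
    simp [stk]
  | succ k ih =>
    have hF := ih (by omega)
    have hc := h.clen k (by omega)
    have hcl := h.c_le k (by omega)
    have hcp := h.cpos k (by omega)
    rw [clm, stk]
    apply List.rel_append
    · rw [List.forall₂_iff_get]
      refine ⟨by simp, ?_⟩
      intro i h1 h2
      left
      refine ⟨by simp, ?_⟩
      intro b hb hx
      have hm := List.get_mem _ ⟨i, h1⟩
      simp only [List.mem_reverse, List.mem_range'_1] at hm
      have := h.pc_le b _ hx
      have := h.xmono (show b ≤ k by omega)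
      omega
    · have hlt : c k - 1 < (clm X c k).length := by omega
      rw [List.drop_eq_getElem_cons hlt]
      have e : c k - 1 + 1 = c k := by omega
      have hrow := h.row_good T hT k (by omega) hF (c k - 1) (by omega) hlt
      rw [e] at hrow ⊢
      refine List.Forall₂.cons ?_ ?_
      · right
        refine ⟨k, by omega, ?_, fun b' h1 h2 => by omega, hrow⟩
        rw [Pc, List.mem_take_iff_getElem]
        exact ⟨c k - 1, by omega, rfl⟩
      · have hD := List.forall₂_drop (c k) hF
        rw [List.forall₂_iff_get] at hD ⊢
        refine ⟨hD.1, ?_⟩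
        intro i h1 h2
        have hcw := hD.2 i h1 h2
        have hxm : ((clm X c k).drop (c k)).get ⟨i, h1⟩ ∈ (clm X c k).drop (c k) :=
          List.get_mem _ _
        have hnot : ((clm X c k).drop (c k)).get ⟨i, h1⟩ ∉ Pc X c k := fun hp =>
          List.disjoint_take_drop (h.clm_nodup k) le_rfl hp hxm
        rcases hcw with ⟨w1, w2⟩ | ⟨b, hb, hxb, hmax, hg⟩
        · left
          refine ⟨w1, ?_⟩
          intro b hb
          rcases Nat.lt_succ_iff_lt_or_eq.1 hb with hb | rfl
          · exact w2 b hb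
          · exact hnot
        · right
          refine ⟨b, by omega, hxb, ?_, hg⟩
          intro b' h1 h2
          rcases Nat.lt_succ_iff_lt_or_eq.1 h2 with hb | rfl
          · exact hmax b' h1 hb
          · exact hnot

theorem Hyp.root_good (h : Hyp X Y c n) (T : Set (ℕ × ℕ))
    (hT : ∀ x y, (x, y) ∈ T ↔ y ≤ n ∧ x ∈ Pc X c y) :
    Good T (0, n) (mrg n (stk X c n)) := by
  have hcp := h.cpos n le_rfl
  have hc := h.clen n le_rfl
  have hs := h.stk_len_fin
  have hrow := h.row_good T hT n le_rfl (h.cols_good T hT n le_rfl) (c n - 1) (by omega) (by omega)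
  have hl := h.clm_last n le_rfl
  rw [List.getLast?_eq_getElem?, hc, hs, List.getElem?_eq_getElem (by omega)] at hl
  rw [Option.some.inj hl, List.take_of_length_le (by omega)] at hrow
  exact hrow

theorem Hyp.c_sum (h : Hyp X Y c n) (k : ℕ) (hk : k ≤ n) :
    ((List.range (k + 1)).map c).sum = Y k + k + 1 := by
  induction k with
  | zero => simp [h.c0]
  | succ k ih =>
    rw [List.range_succ, List.map_append, List.sum_append, ih (by omega)]
    have := h.cs k (by omega)
    simp
    omega

theorem Hyp.rflushAux_eq (ν : List Bool) (h : Hyp (xmax ν) Y c n) (len : ℕ) : ∀ y, y + len ≤ n + 1 →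
    rflushAux ν ((List.range' y len).map c) y (Fb (xmax ν) c y) =
      (List.range' y len).flatMap (fun j => (Pc (xmax ν) c j).map (fun x => (x, j))) := by
  induction len with
  | zero => intro y _; simp [rflushAux]
  | succ len ih =>
    intro y hy
    rw [List.range'_succ, List.map_cons, List.flatMap_cons, rflushAux]
    simp only [rowAvail_eq, h.clm_filter y (by omega)]
    rw [← ih (y + 1) (by omega), Fb_succ]
    rfl

end

theorem bracketOfTree_eq (ν μ : List Bool) (hp : IsNuPath ν μ) :
    bracketOfTree ν (Rflush ν μ) =
      mrg (northSteps ν) (stk (xmax ν) (pointsAtHeight μ) (northSteps ν)) := by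
  have h := hyp_of_path ν μ hp
  set n := northSteps ν with hn
  set c := pointsAtHeight μ with hc
  set L := (List.range (n + 1)).flatMap (fun j => (Pc (xmax ν) c j).map (fun x => (x, j))) with hL
  have hR : Rflush ν μ = {p | p ∈ L} := by
    have := Hyp.rflushAux_eq ν h (n + 1) 0 (by omega)
    rw [← List.range_eq_range'] at this
    unfold Rflush
    rw [hL, ← this]
    rfl
  have hT : ∀ x y, (x, y) ∈ Rflush ν μ ↔ y ≤ n ∧ x ∈ Pc (xmax ν) c y := by
    intro x y
    rw [hR, Set.mem_ofPred_eq, hL]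
    simp only [List.mem_flatMap, List.mem_range, List.mem_map, Prod.mk.injEq]
    constructor
    · rintro ⟨j, hj, x', hx', rfl, rfl⟩
      exact ⟨by omega, hx'⟩
    · rintro ⟨h1, h2⟩
      exact ⟨y, by omega, x, h2, rfl, rfl⟩
  have hnd : L.Nodup := by
    rw [hL, List.nodup_flatMap]
    constructor
    · intro j _
      refine List.Nodup.map ?_ ((h.clm_nodup j).sublist (List.take_sublist _ _))
      intro a b hab
      exact (Prod.mk.inj hab).1
    · refine List.nodup_range.imp ?_
      intro a b hab p h1 h2
      simp only [List.mem_map] at h1 h2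
      obtain ⟨x, _, rfl⟩ := h1
      obtain ⟨x', _, h3⟩ := h2
      exact hab (Prod.mk.inj h3).2.symm
  have hcard : (Rflush ν μ).ncard = ν.length + 1 := by
    have e : Rflush ν μ = (L.toFinset : Set (ℕ × ℕ)) := by
      rw [hR]; ext p; simp
    rw [e, Set.ncard_coe_finset, List.toFinset_card_of_nodup hnd, hL, List.length_flatMap]
    have : (List.range (n + 1)).map (fun j => ((Pc (xmax ν) c j).map (fun x => (x, j))).length) =
        (List.range (n + 1)).map c := by
      apply List.map_congr_left
      intro j hj
      rw [List.mem_range] at hj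
      rw [List.length_map, h.pc_len j (by omega)]
    rw [this, h.c_sum n le_rfl, h.fin, hn, xmax_north, length_eq_steps]
  unfold bracketOfTree
  apply h.root_good _ hT
  rw [← bracketOfPath_eq ν μ hp, hcard]
  simp [bracketOfPath]

theorem bracket_of_rflush (ν : List Bool) (μ : List Bool) (hμ : IsNuPath ν μ) :
    bracketOfTree ν (Rflush ν μ) = bracketOfPath ν μ := by
  rw [bracketOfTree_eq ν μ hμ, bracketOfPath_eq ν μ hμ]
end
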